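/- For every inverse temperature β ∈ (0,∞) and every range exponent α ∈ (2,3), there exist constants c_β > 0 and C_β < ∞ (depending only on β and α) such that for every integer N ≥ 1, the variance of the height at the origin under the discrete Gaussian long-range chain satisfies c_β N^{α−2} ≤ Var_{N,β,α}[φ(0)] ≤ C_β N^{α−2}. -/

import Mathlib

noncomputable section

/-- Configurations of the long-range chain of length `N`: integer-valued height functions
on `ℤ` vanishing outside `{-N, …, N}`. -/
def ChainConfig (N : ℕ) : Type :=
  {φ : ℤ → ℤ // ∀ k : ℤ, (N : ℤ) < |k| → φ k = 0}

/-- Energy `β ∑_{i ≠ j} |φ(i) − φ(j)|^q / |i − j|^α` of a configuration of the long-range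
chain with potential exponent `q` and range exponent `α`. -/
def chainEnergy (β α q : ℝ) (φ : ℤ → ℤ) : ℝ :=
  β * ∑' p : ℤ × ℤ,
      if p.1 = p.2 then 0
      else |((φ p.1 - φ p.2 : ℤ) : ℝ)| ^ q / |((p.1 - p.2 : ℤ) : ℝ)| ^ α

/-- Boltzmann weight of a configuration. -/
def chainWeight (β α q : ℝ) (φ : ℤ → ℤ) : ℝ :=
  Real.exp (-chainEnergy β α q φ)

/-- Partition function of the long-range chain. -/
def chainZ (N : ℕ) (β α q : ℝ) : ℝ :=
  ∑' φ : ChainConfig N, chainWeight β α q φ.val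

/-- Mean of the height at the origin. -/
def chainMean (N : ℕ) (β α q : ℝ) : ℝ :=
  (∑' φ : ChainConfig N, ((φ.val 0 : ℤ) : ℝ) * chainWeight β α q φ.val) / chainZ N β α q

/-- Variance of the height at the origin under the long-range chain `μ_{N,β,α}`
(with potential exponent `q`; `q = 2` is the discrete Gaussian chain,
`q ∈ (0,2)` the `q`-SOS chain). -/
def chainVar (N : ℕ) (β α q : ℝ) : ℝ :=
  (∑' φ : ChainConfig N, ((φ.val 0 : ℤ) : ℝ) ^ 2 * chainWeight β α q φ.val) / chainZ N β α q
    - chainMean N β α q ^ 2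

end


theorem summable_pi_fin (n : ℕ) (f : Fin n → ℤ → ℝ) (h0 : ∀ i k, 0 ≤ f i k) (hs : ∀ i, Summable (f i)) :
    Summable (fun φ : Fin n → ℤ => ∏ i, f i (φ i)) ∧
      ∑' φ : Fin n → ℤ, ∏ i, f i (φ i) = ∏ i, ∑' k, f i k := by
  induction n with
  | zero =>
    refine ⟨(hasSum_fintype _).summable, ?_⟩
    simp [tsum_fintype]
  | succ n ih =>
    obtain ⟨i1, i2⟩ := ih (fun i => f i.succ) (fun i k => h0 _ _) (fun i => hs _)
    let e := Fin.consEquiv (fun _ : Fin (n+1) => ℤ)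
    have he : ∀ p : ℤ × (Fin n → ℤ), ∏ i, f i (e p i) = f 0 p.1 * ∏ i : Fin n, f i.succ (p.2 i) := by
      intro p
      rw [Fin.prod_univ_succ]
      simp [e, Fin.consEquiv]
    have hsum : Summable (fun p : ℤ × (Fin n → ℤ) => f 0 p.1 * ∏ i : Fin n, f i.succ (p.2 i)) :=
      Summable.mul_of_nonneg (f := f 0) (g := fun φ : Fin n → ℤ => ∏ i : Fin n, f i.succ (φ i)) (hs 0) i1
        (fun k => h0 0 k) (fun φ => Finset.prod_nonneg fun i _ => h0 i.succ (φ i))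
    constructor
    · rw [← e.summable_iff]
      exact hsum.congr (fun p => (he p).symm)
    · rw [← e.tsum_eq, Fin.prod_univ_succ, ← i2, (hs 0).tsum_mul_tsum i1 hsum]
      exact tsum_congr he

theorem summable_pi_prod {ι : Type*} [Fintype ι] (f : ι → ℤ → ℝ) (h0 : ∀ i k, 0 ≤ f i k)
    (hs : ∀ i, Summable (f i)) :
    Summable (fun φ : ι → ℤ => ∏ i, f i (φ i)) := by
  classical
  let e := Fintype.equivFin ι
  have := (summable_pi_fin _ (fun i => f (e.symm i)) (fun i k => h0 _ _) (fun i => hs _)).1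
  rw [← (Equiv.arrowCongr e (Equiv.refl ℤ)).summable_iff] at this
  refine this.congr (fun φ => ?_)
  rw [← e.symm.prod_comp]
  simp

theorem summable_gauss1 (c : ℝ) (hc : 0 < c) : Summable (fun k : ℤ => Real.exp (-(c * (k:ℝ)^2))) := by
  have key : Summable (fun k : ℕ => Real.exp (-(c * (k:ℝ)^2))) := by
    have h := summable_geometric_of_lt_one (Real.exp_pos (-c)).le (by rw [Real.exp_lt_one_iff]; linarith)
    refine Summable.of_nonneg_of_le (fun _ => (Real.exp_pos _).le) (fun k => ?_) h
    rw [← Real.exp_nat_mul]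
    apply Real.exp_le_exp.2
    have : (k:ℝ) ≤ (k:ℝ)^2 := by
      have : k ≤ k^2 := Nat.le_self_pow (by norm_num) k
      exact_mod_cast this
    nlinarith
  apply Summable.of_nat_of_neg
  · simpa using key
  · simpa using key

theorem summable_gauss {ι : Type*} [Fintype ι] (c : ℝ) (hc : 0 < c) :
    Summable (fun φ : ι → ℤ => Real.exp (-(c * ∑ i, (φ i:ℝ)^2))) := by
  refine (summable_pi_prod (fun _ k => Real.exp (-(c * (k:ℝ)^2))) (fun _ _ => (Real.exp_pos _).le)
    (fun _ => summable_gauss1 c hc)).congr (fun φ => ?_)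
  rw [← Real.exp_sum, Finset.mul_sum, Finset.sum_neg_distrib]

/-- the even/odd decomposition of `ℤ^ι`. -/
def parEquiv (ι : Type*) : (ι → ℤ) × (ι → Fin 2) ≃ (ι → ℤ) :=
  ((Equiv.arrowCongr (Equiv.refl ι) (Int.divModEquiv 2)).trans (Equiv.arrowProdEquivProdArrow _ (fun _ => ℤ) (fun _ => Fin 2))).symm

theorem parEquiv_apply (ι : Type*) (w : ι → ℤ) (c : ι → Fin 2) :
    parEquiv ι (w, c) = w + w + (fun i => ((c i : ℕ) : ℤ)) := by
  ext i
  simp [parEquiv, Int.divModEquiv, Equiv.arrowProdEquivProdArrow]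
  ring

section key
variable {ι V : Type*} [Fintype ι] [DecidableEq ι] [AddCommGroup V]

/-- Theta function. -/
noncomputable def thF (E : V → ℝ) (J : (ι → ℤ) →+ V) (z : V) : ℝ := ∑' φ, Real.exp (-E (J φ + z))

set_option maxHeartbeats 1000000 in
theorem thF_mul (E : V → ℝ) (J : (ι → ℤ) →+ V)
    (hE0 : ∀ x, 0 ≤ E x)
    (hE : ∀ x y, E (x + y) + E (x - y) = 2 * E x + 2 * E y)
    (hs : ∀ z, Summable (fun φ => Real.exp (-(E (J φ + z) / 2)))) (x y : V) :
    thF E J x * thF E J y = ∑ c : ι → Fin 2,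
      (∑' w, Real.exp (-(E (J w + J w + (J (fun i => ((c i : ℕ) : ℤ)) + (x + y))) / 2))) *
      (∑' w, Real.exp (-(E (J w + J w + (J (fun i => ((c i : ℕ) : ℤ)) + (x - y))) / 2))) := by
  have hs1 : ∀ z, Summable (fun φ => Real.exp (-E (J φ + z))) := fun z =>
    Summable.of_nonneg_of_le (fun _ => (Real.exp_pos _).le)
      (fun φ => Real.exp_le_exp.2 (by linarith [hE0 (J φ + z)])) (hs z)
  have hs2 : ∀ z, Summable (fun w => Real.exp (-(E (J w + J w + z) / 2))) := by
    intro z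
    have hinj : Function.Injective (fun w : ι → ℤ => w + w) := by
      intro a b h
      ext i
      have := congrFun h i
      simp at this
      omega
    have := (hs z).comp_injective hinj
    refine this.congr (fun w => ?_)
    simp
  have hp : Summable (fun p : (ι → ℤ) × (ι → ℤ) => Real.exp (-E (J p.1 + x)) * Real.exp (-E (J p.2 + y))) :=
    Summable.mul_of_nonneg (f := fun φ => Real.exp (-E (J φ + x))) (g := fun φ => Real.exp (-E (J φ + y)))
      (hs1 x) (hs1 y) (fun _ => (Real.exp_pos _).le) (fun _ => (Real.exp_pos _).le)
  have hmm : ∀ z z', Summable (fun p : (ι → ℤ) × (ι → ℤ) => Real.exp (-(E (J p.1 + J p.1 + z) / 2)) * Real.exp (-(E (J p.2 + J p.2 + z') / 2))) :=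
    fun z z' => Summable.mul_of_nonneg (f := fun w => Real.exp (-(E (J w + J w + z) / 2)))
      (g := fun w => Real.exp (-(E (J w + J w + z') / 2)))
      (hs2 z) (hs2 z') (fun _ => (Real.exp_pos _).le) (fun _ => (Real.exp_pos _).le)
  let e1 : (ι → ℤ) × (ι → ℤ) ≃ (ι → ℤ) × (ι → ℤ) :=
    { toFun := fun p => (p.2 + p.1, p.2)
      invFun := fun p => (p.1 - p.2, p.2)
      left_inv := fun p => by simp
      right_inv := fun p => by simp }
  let e2 : ((ι → Fin 2) × (ι → ℤ)) × (ι → ℤ) ≃ (ι → ℤ) × (ι → ℤ) :=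
    { toFun := fun q => (parEquiv ι (q.1.2, q.1.1), q.2 - q.1.2)
      invFun := fun p => ((((parEquiv ι).symm p.1).2, ((parEquiv ι).symm p.1).1), p.2 + ((parEquiv ι).symm p.1).1)
      left_inv := fun q => by simp
      right_inv := fun p => by simp }
  let e3 : (ι → Fin 2) × ((ι → ℤ) × (ι → ℤ)) ≃ (ι → ℤ) × (ι → ℤ) := ((Equiv.prodAssoc _ _ _).symm.trans e2).trans e1
  have hval : ∀ q : (ι → Fin 2) × ((ι → ℤ) × (ι → ℤ)),
      Real.exp (-E (J (e3 q).1 + x)) * Real.exp (-E (J (e3 q).2 + y)) =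
      Real.exp (-(E (J q.2.1 + J q.2.1 + (J (fun i => ((q.1 i : ℕ) : ℤ)) + (x - y))) / 2)) *
      Real.exp (-(E (J q.2.2 + J q.2.2 + (J (fun i => ((q.1 i : ℕ) : ℤ)) + (x + y))) / 2)) := by
    rintro ⟨c, w, w'⟩
    rw [← Real.exp_add, ← Real.exp_add]
    congr 1
    have h1 : (e3 (c, w, w')).1 = w' + w + (fun i => ((c i : ℕ) : ℤ)) := by
      simp only [e3, e1, e2, Equiv.trans_apply, Equiv.coe_fn_mk, Equiv.prodAssoc_symm_apply, parEquiv_apply]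
      abel
    have h2 : (e3 (c, w, w')).2 = w' - w := by
      simp only [e3, e1, e2, Equiv.trans_apply, Equiv.coe_fn_mk, Equiv.prodAssoc_symm_apply]
    rw [h1, h2]
    have := hE (J (w' + w + (fun i => ((c i : ℕ) : ℤ))) + x) (J (w' - w) + y)
    have a1 : J (w' + w + (fun i => ((c i : ℕ) : ℤ))) + x + (J (w' - w) + y) =
      J w' + J w' + (J (fun i => ((c i : ℕ) : ℤ)) + (x + y)) := by
      simp only [map_add, map_sub]; abel
    have a2 : J (w' + w + (fun i => ((c i : ℕ) : ℤ))) + x - (J (w' - w) + y) =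
      J w + J w + (J (fun i => ((c i : ℕ) : ℤ)) + (x - y)) := by
      simp only [map_add, map_sub]; abel
    rw [a1, a2] at this
    simp only
    linarith
  unfold thF
  rw [(hs1 x).tsum_mul_tsum (hs1 y) hp, ← e3.tsum_eq]
  have hp' := (e3.summable_iff).2 hp
  rw [Summable.tsum_prod (f := fun q => Real.exp (-E (J (e3 q).1 + x)) * Real.exp (-E (J (e3 q).2 + y))) hp', tsum_fintype]
  apply Finset.sum_congr rfl
  intro c _
  rw [mul_comm, (hs2 _).tsum_mul_tsum (hs2 _) (hmm _ _)]
  apply tsum_congr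
  intro p
  exact hval (c, p)

theorem thF_pos (E : V → ℝ) (J : (ι → ℤ) →+ V)
    (hE0 : ∀ x, 0 ≤ E x)
    (hs : ∀ z, Summable (fun φ => Real.exp (-(E (J φ + z) / 2)))) (x : V) : 0 < thF E J x := by
  have hs1 : Summable (fun φ => Real.exp (-E (J φ + x))) := 
    Summable.of_nonneg_of_le (fun _ => (Real.exp_pos _).le)
      (fun φ => Real.exp_le_exp.2 (by linarith [hE0 (J φ + x)])) (hs x)
  exact hs1.tsum_pos (fun _ => (Real.exp_pos _).le) 0 (Real.exp_pos _)

theorem thF_key (E : V → ℝ) (J : (ι → ℤ) →+ V)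
    (hE0 : ∀ x, 0 ≤ E x)
    (hE : ∀ x y, E (x + y) + E (x - y) = 2 * E x + 2 * E y)
    (hs : ∀ z, Summable (fun φ => Real.exp (-(E (J φ + z) / 2)))) (x y : V) :
    (thF E J x * thF E J y)^2 ≤ (thF E J (x + y) * thF E J 0) * (thF E J (x - y) * thF E J 0) := by
  rw [thF_mul E J hE0 hE hs x y, thF_mul E J hE0 hE hs (x+y) 0, thF_mul E J hE0 hE hs (x-y) 0]
  simp only [add_zero, sub_zero]
  have := Finset.sum_mul_sq_le_sq_mul_sq (Finset.univ : Finset (ι → Fin 2))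
    (fun c => ∑' w, Real.exp (-(E (J w + J w + (J (fun i => ((c i : ℕ) : ℤ)) + (x + y))) / 2)))
    (fun c => ∑' w, Real.exp (-(E (J w + J w + (J (fun i => ((c i : ℕ) : ℤ)) + (x - y))) / 2)))
  simpa only [sq] using this

end key


section gauss
variable {ι : Type*}

/-- inclusion of the integer lattice. -/
def latJ (ι : Type*) : (ι → ℤ) →+ (ι → ℝ) where
  toFun φ := fun i => (φ i : ℝ)
  map_zero' := by ext i; simp
  map_add' x y := by ext i; simp

@[simp] theorem latJ_apply (φ : ι → ℤ) (i : ι) : latJ ι φ i = (φ i : ℝ) := rfl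

theorem cosh_lower (y : ℝ) : 1 + 2 * y^2 ≤ Real.cosh (2*y) := by
  have h : y^2 ≤ (Real.sinh y)^2 := by
    rw [sq_le_sq, Real.abs_sinh]
    exact Real.self_le_sinh_iff.2 (abs_nonneg y)
  have := Real.cosh_two_mul y
  have := Real.cosh_sq y
  linarith

theorem cosh_upper (y : ℝ) : Real.cosh (2*y) ≤ 1 + 2 * y^2 * Real.exp (2*y^2) := by
  have h := Real.cosh_le_exp_half_sq (2*y)
  have e : (2*y)^2/2 = 2*y^2 := by ring
  rw [e] at h
  have h2 := Real.add_one_le_exp (-(2*y^2))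
  have h3 : Real.exp (2*y^2) * Real.exp (-(2*y^2)) = 1 := by rw [← Real.exp_add]; simp
  have := Real.exp_pos (2*y^2)
  nlinarith

theorem riesz [Fintype ι] (B : (ι → ℝ) →ₗ[ℝ] (ι → ℝ) →ₗ[ℝ] ℝ) (c : ℝ) (hc : 0 < c)
    (hB : ∀ x, c * ∑ i, (x i)^2 ≤ B x x) (o : ι) : ∃ s, ∀ x, B s x = x o := by
  have hinj : Function.Injective B := by
    rw [injective_iff_map_eq_zero]
    intro x hx
    have h := hB x
    rw [hx] at h
    simp only [LinearMap.zero_apply] at h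
    have h1 : ∑ i, (x i)^2 ≤ 0 := by
      by_contra hcon
      push Not at hcon
      have := mul_pos hc hcon
      linarith
    have h2 := (Finset.sum_eq_zero_iff_of_nonneg (fun i _ => sq_nonneg (x i))).1
      (le_antisymm h1 (Finset.sum_nonneg fun i _ => sq_nonneg (x i)))
    ext i
    have := h2 i (Finset.mem_univ i)
    simpa using this
  have hsurj : Function.Surjective B := by
    refine (LinearMap.injective_iff_surjective_of_finrank_eq_finrank ?_).1 hinj
    exact (Subspace.dual_finrank_eq (K := ℝ) (V := ι → ℝ)).symm
  obtain ⟨s, hs⟩ := hsurj (LinearMap.proj o)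
  exact ⟨s, fun x => by rw [hs]; rfl⟩

variable [Fintype ι] (B : (ι → ℝ) →ₗ[ℝ] (ι → ℝ) →ₗ[ℝ] ℝ) (c : ℝ)

theorem B_nonneg (hc : 0 < c) (hB : ∀ x, c * ∑ i, (x i)^2 ≤ B x x) (x : ι → ℝ) : 0 ≤ B x x :=
  le_trans (mul_nonneg hc.le (Finset.sum_nonneg fun i _ => sq_nonneg (x i))) (hB x)

theorem B_par (x y : ι → ℝ) : B (x+y) (x+y) + B (x-y) (x-y) = 2 * B x x + 2 * B y y := by
  simp only [map_add, map_sub, LinearMap.add_apply, LinearMap.sub_apply]; ring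

theorem B_add (hsym : ∀ x y, B x y = B y x) (x y : ι → ℝ) :
    B (x+y) (x+y) = B x x + 2 * B y x + B y y := by
  simp only [map_add, LinearMap.add_apply]; rw [hsym x y]; ring

theorem B_lat_lower (hc : 0 < c) (hB : ∀ x, c * ∑ i, (x i)^2 ≤ B x x) (z : ι → ℝ) (φ : ι → ℤ) :
    (c/2) * ∑ i, (φ i : ℝ)^2 - c * ∑ i, (z i)^2 ≤ B (latJ ι φ + z) (latJ ι φ + z) := by
  refine le_trans ?_ (hB _)
  rw [Finset.mul_sum, Finset.mul_sum, Finset.mul_sum, ← Finset.sum_sub_distrib]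
  apply Finset.sum_le_sum
  intro i _
  simp only [Pi.add_apply, latJ_apply]
  nlinarith [mul_nonneg hc.le (sq_nonneg ((φ i : ℝ) + 2 * z i))]

theorem B_summable (hc : 0 < c) (hB : ∀ x, c * ∑ i, (x i)^2 ≤ B x x) (t : ℝ) (ht : 0 < t) (z : ι → ℝ) :
    Summable (fun φ => Real.exp (-(t * B (latJ ι φ + z) (latJ ι φ + z)))) := by
  have h := (summable_gauss (ι := ι) (t * (c/2)) (by positivity)).mul_left (Real.exp (t * (c * ∑ i, (z i)^2)))
  refine Summable.of_nonneg_of_le (fun _ => (Real.exp_pos _).le) (fun φ => ?_) h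
  rw [← Real.exp_add]
  apply Real.exp_le_exp.2
  have := mul_le_mul_of_nonneg_left (B_lat_lower B c hc hB z φ) ht.le
  linarith

theorem B_summable' (hc : 0 < c) (hB : ∀ x, c * ∑ i, (x i)^2 ≤ B x x) (z : ι → ℝ) :
    Summable (fun φ => Real.exp (-(B (latJ ι φ + z) (latJ ι φ + z)))) := by
  simpa using B_summable B c hc hB 1 one_pos z

theorem B_hasSum_cosh (hsym : ∀ x y, B x y = B y x) (hc : 0 < c) (hB : ∀ x, c * ∑ i, (x i)^2 ≤ B x x) (z : ι → ℝ) :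
    HasSum (fun φ => Real.exp (-(B (latJ ι φ) (latJ ι φ))) * Real.cosh (2 * B z (latJ ι φ)))
      (Real.exp (B z z) / 2 * (thF (fun x => B x x) (latJ ι) z + thF (fun x => B x x) (latJ ι) (-z))) := by
  have h := ((B_summable' B c hc hB z).hasSum.add (B_summable' B c hc hB (-z)).hasSum).mul_left (Real.exp (B z z) / 2)
  refine h.congr_fun ?_
  intro φ
  rw [B_add B hsym, B_add B hsym, Real.cosh_eq]
  simp only [map_neg, LinearMap.neg_apply, neg_neg]
  set a := B (latJ ι φ) (latJ ι φ)
  set b := B z (latJ ι φ)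
  set d := B z z
  have e1 : Real.exp (-(a + 2*b + d)) = Real.exp (-a) * Real.exp (-(2*b)) * Real.exp (-d) := by
    rw [← Real.exp_add, ← Real.exp_add]; ring_nf
  have e2 : Real.exp (-(a + 2*(-b) + d)) = Real.exp (-a) * Real.exp (2*b) * Real.exp (-d) := by
    rw [← Real.exp_add, ← Real.exp_add]; ring_nf
  have e3 : Real.exp d * Real.exp (-d) = 1 := by rw [← Real.exp_add]; simp
  rw [e1, e2]
  linear_combination (-(Real.exp (-a) * (Real.exp (2*b) + Real.exp (-(2*b)))) / 2) * e3

theorem B_summable_sq (hsym : ∀ x y, B x y = B y x) (hc : 0 < c) (hB : ∀ x, c * ∑ i, (x i)^2 ≤ B x x) (o : ι) :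
    Summable (fun φ : ι → ℤ => (φ o : ℝ)^2 * Real.exp (-(B (latJ ι φ) (latJ ι φ)))) := by
  obtain ⟨s, hs⟩ := riesz B c hc hB o
  refine Summable.of_nonneg_of_le (fun φ => by positivity) (fun φ => ?_) (B_hasSum_cosh B c hsym hc hB s).summable
  rw [mul_comm, hs, latJ_apply]
  apply mul_le_mul_of_nonneg_left _ (Real.exp_pos _).le
  nlinarith [cosh_lower (φ o : ℝ), sq_nonneg (φ o : ℝ)]

theorem thF_bdd (hc : 0 < c) (hB : ∀ x, c * ∑ i, (x i)^2 ≤ B x x) :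
    ∃ M, ∀ z, thF (fun x => B x x) (latJ ι) z ≤ M := by
  refine ⟨Real.exp (c * Fintype.card ι) * ∑' φ : ι → ℤ, Real.exp (-((c/2) * ∑ i, (φ i:ℝ)^2)), fun z => ?_⟩
  have hper : thF (fun x => B x x) (latJ ι) z = thF (fun x => B x x) (latJ ι) (fun i => Int.fract (z i)) := by
    unfold thF
    rw [← (Equiv.subRight (fun i => ⌊z i⌋)).tsum_eq]
    apply tsum_congr
    intro φ
    have : latJ ι ((Equiv.subRight fun i => ⌊z i⌋) φ) + z = latJ ι φ + fun i => Int.fract (z i) := by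
      ext i
      have := Int.self_sub_floor (z i)
      simp only [Equiv.subRight_apply, Pi.add_apply, latJ_apply, Pi.sub_apply, Int.cast_sub]
      linarith
    simp only [this]
  rw [hper]
  unfold thF
  rw [← tsum_mul_left]
  refine Summable.tsum_le_tsum (fun φ => ?_) (B_summable' B c hc hB _) ((summable_gauss (c/2) (by positivity)).mul_left _)
  rw [← Real.exp_add]
  apply Real.exp_le_exp.2
  have h1 := B_lat_lower B c hc hB (fun i => Int.fract (z i)) φ
  have h2 : ∑ i, (Int.fract (z i))^2 ≤ Fintype.card ι := by
    calc ∑ i, (Int.fract (z i))^2 ≤ ∑ i : ι, (1:ℝ) := by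
          apply Finset.sum_le_sum
          intro i _
          have := Int.fract_nonneg (z i)
          have := Int.fract_lt_one (z i)
          nlinarith
      _ = _ := by simp
  have := mul_le_mul_of_nonneg_left h2 hc.le
  linarith

theorem B_hs (hc : 0 < c) (hB : ∀ x, c * ∑ i, (x i)^2 ≤ B x x) (z : ι → ℝ) :
    Summable (fun φ => Real.exp (-((fun x => B x x) (latJ ι φ + z) / 2))) := by
  have := B_summable B c hc hB (1/2) (by norm_num) z
  refine this.congr (fun φ => ?_)
  congr 1; simp only; ring

theorem thF_le_zero [DecidableEq ι] (hc : 0 < c) (hB : ∀ x, c * ∑ i, (x i)^2 ≤ B x x) (z : ι → ℝ) :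
    thF (fun x => B x x) (latJ ι) z ≤ thF (fun x => B x x) (latJ ι) 0 := by
  obtain ⟨M, hM⟩ := thF_bdd B c hc hB
  set F := thF (fun x => B x x) (latJ ι) with hF
  have hpos : ∀ z, 0 < F z := fun z => thF_pos _ _ (B_nonneg B c hc hB) (B_hs B c hc hB) z
  have h4 : ∀ z, (F z / F 0)^4 ≤ F (z+z) / F 0 := by
    intro z
    have h := thF_key (fun x => B x x) (latJ ι) (B_nonneg B c hc hB) (B_par B) (B_hs B c hc hB) z z
    rw [← hF, sub_self] at h
    rw [div_pow, div_le_div_iff₀ (pow_pos (hpos 0) 4) (hpos 0)]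
    nlinarith [hpos 0]
  by_contra hcon
  push Not at hcon
  have hgt : 1 < F z / F 0 := by rw [one_lt_div (hpos 0)]; exact hcon
  have hit : ∀ n : ℕ, ∃ w, (F z / F 0)^(4^n) ≤ F w / F 0 := by
    intro n
    induction n with
    | zero => exact ⟨z, by simp⟩
    | succ n ih =>
      obtain ⟨w, hw⟩ := ih
      refine ⟨w + w, le_trans ?_ (h4 w)⟩
      rw [pow_succ 4 n, pow_mul]
      exact pow_le_pow_left₀ (by positivity) hw 4
  obtain ⟨n, hn⟩ := pow_unbounded_of_one_lt (M / F 0) hgt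
  obtain ⟨w, hw⟩ := hit n
  have h1 : (F z / F 0)^n ≤ (F z / F 0)^(4^n) := pow_le_pow_right₀ hgt.le (Nat.lt_pow_self (by norm_num)).le
  have h2 : F w / F 0 ≤ M / F 0 := div_le_div_of_nonneg_right (hM w) (hpos 0).le
  linarith

theorem gauss_upper [DecidableEq ι] (hsym : ∀ x y, B x y = B y x) (hc : 0 < c) (hB : ∀ x, c * ∑ i, (x i)^2 ≤ B x x)
    (o : ι) (K : ℝ) (hK0 : 0 < K) (hK : ∀ x : ι → ℝ, (x o)^2 ≤ K * B x x) :
    ∑' φ : ι → ℤ, (φ o : ℝ)^2 * Real.exp (-(B (latJ ι φ) (latJ ι φ))) ≤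
      K * ∑' φ : ι → ℤ, Real.exp (-(B (latJ ι φ) (latJ ι φ))) := by
  obtain ⟨s, hs⟩ := riesz B c hc hB o
  have hQs : B s s ≤ K := by
    have h1 := hK s
    rw [← hs s] at h1
    have h0 := B_nonneg B c hc hB s
    rcases h0.eq_or_lt with h | h
    · rw [← h]; exact hK0.le
    · rw [sq] at h1
      exact le_of_mul_le_mul_right h1 h
  set ε := Real.sqrt (1/K) with hε
  have hε2 : ε^2 = 1/K := Real.sq_sqrt (by positivity)
  have h := B_hasSum_cosh B c hsym hc hB (ε • s)
  have hZ0 : thF (fun x => B x x) (latJ ι) 0 = ∑' φ : ι → ℤ, Real.exp (-(B (latJ ι φ) (latJ ι φ))) := by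
    simp [thF]
  have hb1 := thF_le_zero B c hc hB (ε • s)
  have hb2 := thF_le_zero B c hc hB (-(ε • s))
  rw [hZ0] at hb1 hb2
  have hQε : B (ε • s) (ε • s) ≤ 1 := by
    simp only [map_smul, LinearMap.smul_apply, smul_eq_mul]
    rw [← mul_assoc, ← sq, hε2, one_div, inv_mul_le_iff₀ hK0]
    linarith
  have hsq := B_summable_sq B c hsym hc hB o
  have hsZ : Summable (fun φ : ι → ℤ => Real.exp (-(B (latJ ι φ) (latJ ι φ)))) := by
    simpa using B_summable' B c hc hB 0
  set Z := ∑' φ : ι → ℤ, Real.exp (-(B (latJ ι φ) (latJ ι φ))) with hZ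
  set S := ∑' φ : ι → ℤ, (φ o : ℝ)^2 * Real.exp (-(B (latJ ι φ) (latJ ι φ))) with hS
  have hle := hasSum_le (fun φ => ?_) (hsZ.hasSum.add (hsq.hasSum.mul_left (2 * ε^2))) h
  · have hZpos : 0 < Z := hsZ.tsum_pos (fun _ => (Real.exp_pos _).le) 0 (Real.exp_pos _)
    have he : Real.exp (B (ε • s) (ε • s)) ≤ Real.exp 1 := Real.exp_le_exp.2 hQε
    have he1 := Real.exp_one_lt_d9
    have : Z + 2 * ε^2 * S ≤ 3 * Z := by
      refine hle.trans ?_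
      have hp := Real.exp_pos (B (ε • s) (ε • s))
      calc _ ≤ Real.exp (B (ε • s) (ε • s)) / 2 * (Z + Z) := by
            apply mul_le_mul_of_nonneg_left (by linarith) (by positivity)
        _ ≤ 3 * Z := by nlinarith
    rw [hε2] at this
    have h3 : 1 / K * S ≤ Z := by linarith
    rw [one_div, inv_mul_le_iff₀ hK0] at h3
    exact h3
  · simp only [map_smul, LinearMap.smul_apply, smul_eq_mul, hs, latJ_apply]
    have := mul_le_mul_of_nonneg_left (cosh_lower (ε * φ o)) (Real.exp_pos (-(B (latJ ι φ) (latJ ι φ)))).le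
    refine le_trans (le_of_eq ?_) this
    ring

end gauss


section lower

theorem summable_shift {m : ℕ} (c : ℝ) (hc : 0 < c) (b : Fin m → ℤ) :
    Summable (fun n : Fin m → ℤ => Real.exp (-(c * ∑ i, ((n i + b i : ℤ) : ℝ)^2))) := by
  have h := summable_gauss (ι := Fin m) c hc
  rw [← (Equiv.addRight b).summable_iff] at h
  exact h

theorem summable_gauss1_lin (C e : ℝ) (hC : 0 < C) :
    Summable (fun k : ℤ => Real.exp (-(C * (k:ℝ)^2) - 2 * e * k)) := by
  have h := (summable_gauss1 (C/2) (by positivity)).mul_left (Real.exp (2 * e^2/C))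
  refine Summable.of_nonneg_of_le (fun _ => (Real.exp_pos _).le) (fun k => ?_) h
  rw [← Real.exp_add]
  apply Real.exp_le_exp.2
  have : 0 ≤ (C * k + 2 * e)^2 / (2*C) := by positivity
  have e1 : (C * k + 2 * e)^2 / (2*C) = C/2*(k:ℝ)^2 + 2 * e * k + 2*e^2/C := by field_simp; ring
  linarith

theorem theta_lower (C e : ℝ) (hC : 0 < C) :
    ∑' k : ℤ, Real.exp (-(C * (k:ℝ)^2)) + 2 * e^2 * Real.exp (-C) ≤
      ∑' k : ℤ, Real.exp (-(C * (k:ℝ)^2) - 2 * e * k) := by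
  have hs := summable_gauss1_lin C e hC
  have hs' := summable_gauss1_lin C (-e) hC
  have heq : ∑' k : ℤ, Real.exp (-(C * (k:ℝ)^2) - 2 * (-e) * k) = ∑' k : ℤ, Real.exp (-(C * (k:ℝ)^2) - 2 * e * k) := by
    rw [← (Equiv.neg ℤ).tsum_eq]
    apply tsum_congr
    intro k
    congr 1
    simp
  have h1 := (hs.hasSum.add hs'.hasSum)
  rw [heq] at h1
  have h2 := ((summable_gauss1 C hC).hasSum.mul_left 2).add (hasSum_ite_eq (1:ℤ) (4 * e^2 * Real.exp (-C)))
  have := hasSum_le (fun k => ?_) h2 h1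
  · linarith
  · have hc := cosh_lower (e * k)
    rw [Real.cosh_eq] at hc
    have e1 : Real.exp (-(C * (k:ℝ)^2) - 2 * e * k) = Real.exp (-(C * (k:ℝ)^2)) * Real.exp (-(2 * (e * k))) := by
      rw [← Real.exp_add]; ring_nf
    have e2 : Real.exp (-(C * (k:ℝ)^2) - 2 * (-e) * k) = Real.exp (-(C * (k:ℝ)^2)) * Real.exp (2 * (e * k)) := by
      rw [← Real.exp_add]; ring_nf
    rw [e1, e2]
    have hp := Real.exp_pos (-(C * (k:ℝ)^2))
    have h3 := mul_le_mul_of_nonneg_left hc hp.le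
    split_ifs with hk
    · subst hk
      simp only [Int.cast_one, one_pow, mul_one] at h3 ⊢
      linarith
    · have : 0 ≤ Real.exp (-(C * (k:ℝ)^2)) * (e * k)^2 := by positivity
      linarith

theorem theta_prod {m : ℕ} (C e : ℝ) (hC : 0 < C) :
    ∑' n : Fin m → ℤ, Real.exp (-(C * ∑ i, (n i : ℝ)^2) - 2 * e * ∑ i, (n i : ℝ)) =
      (∑' k : ℤ, Real.exp (-(C * (k:ℝ)^2) - 2 * e * k))^m := by
  have := (summable_pi_fin m (fun _ k => Real.exp (-(C * (k:ℝ)^2) - 2 * e * k)) (fun _ _ => (Real.exp_pos _).le)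
    (fun _ => summable_gauss1_lin C e hC)).2
  rw [Finset.prod_const, Finset.card_univ, Fintype.card_fin] at this
  rw [← this]
  apply tsum_congr
  intro n
  rw [← Real.exp_sum, Finset.sum_sub_distrib, Finset.sum_neg_distrib, Finset.mul_sum, Finset.mul_sum]

variable {ι : Type*} [Fintype ι] [DecidableEq ι]

theorem gauss_compare (B : (ι → ℝ) →ₗ[ℝ] (ι → ℝ) →ₗ[ℝ] ℝ) (c : ℝ) (hc : 0 < c)
    (hB : ∀ x, c * ∑ i, (x i)^2 ≤ B x x) (m : ℕ) (T : (Fin m → ℤ) →+ (ι → ℤ)) (C c' : ℝ) (hc' : 0 < c')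
    (hT : ∀ n, B (latJ ι (T n)) (latJ ι (T n)) + c' * ∑ i, (n i : ℝ)^2 ≤ C * ∑ i, (n i : ℝ)^2)
    (z : ι → ℝ) :
    2 * (∑' n : Fin m → ℤ, Real.exp (-(B (latJ ι (T n) + z) (latJ ι (T n) + z) + (C * ∑ i, (n i : ℝ)^2 - B (latJ ι (T n)) (latJ ι (T n)))))) *
      thF (fun x => B x x) (latJ ι) 0 ≤
    (∑' n : Fin m → ℤ, Real.exp (-(C * ∑ i, (n i : ℝ)^2))) *
      (thF (fun x => B x x) (latJ ι) z + thF (fun x => B x x) (latJ ι) (-z)) := by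
  let R : (Fin m → ℤ) → ℝ := fun b => C * ∑ i, (b i : ℝ)^2 - B (latJ ι (T b)) (latJ ι (T b))
  have hRlow : ∀ b, c' * ∑ i, (b i : ℝ)^2 ≤ R b := fun b => by
    have := hT b
    simp only [R]; linarith
  have hR0 : ∀ b, 0 ≤ R b := fun b => le_trans (mul_nonneg hc'.le (Finset.sum_nonneg fun i _ => sq_nonneg _)) (hRlow b)
  have hRpar : ∀ x y, R (x + y) + R (x - y) = 2 * R x + 2 * R y := by
    intro x y
    have h1 := B_par B (latJ ι (T x)) (latJ ι (T y))
    have h2 : ∑ i, ((x + y) i : ℝ)^2 + ∑ i, ((x - y) i : ℝ)^2 = 2 * ∑ i, (x i : ℝ)^2 + 2 * ∑ i, (y i : ℝ)^2 := by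
      rw [Finset.mul_sum, Finset.mul_sum, ← Finset.sum_add_distrib, ← Finset.sum_add_distrib]
      apply Finset.sum_congr rfl
      intro i _
      simp only [Pi.add_apply, Pi.sub_apply]
      push_cast
      ring
    simp only [R]
    rw [map_add T, map_sub T, map_add (latJ ι), map_sub (latJ ι)]
    linear_combination C * h2 - h1
  let E : (ι → ℝ) × (Fin m → ℤ) → ℝ := fun p => B p.1 p.1 + R p.2
  let J : (Fin m → ℤ) →+ (ι → ℝ) × (Fin m → ℤ) := ((latJ ι).comp T).prod (AddMonoidHom.id _)
  have hJ : ∀ n, J n = (latJ ι (T n), n) := fun n => rfl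
  have hE0 : ∀ x, 0 ≤ E x := fun x => add_nonneg (B_nonneg B c hc hB x.1) (hR0 x.2)
  have hEpar : ∀ x y, E (x + y) + E (x - y) = 2 * E x + 2 * E y := by
    intro x y
    have h1 := B_par B x.1 y.1
    have h2 := hRpar x.2 y.2
    simp only [E, Prod.fst_add, Prod.snd_add, Prod.fst_sub, Prod.snd_sub]
    linarith
  have hs : ∀ z, Summable (fun n => Real.exp (-(E (J n + z) / 2))) := by
    intro z
    refine Summable.of_nonneg_of_le (fun _ => (Real.exp_pos _).le) (fun n => ?_) (summable_shift (c'/2) (by positivity) z.2)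
    apply Real.exp_le_exp.2
    have h1 := hRlow (n + z.2)
    have h2 := B_nonneg B c hc hB (J n + z).1
    simp only [Pi.add_apply] at h1
    have h3 : E (J n + z) = B (J n + z).1 (J n + z).1 + R (n + z.2) := rfl
    rw [h3]
    linarith
  set h : (ι → ℝ) → ℝ := fun a => thF E J (a, 0) with hh
  have hhpos : ∀ a, 0 < h a := fun a => thF_pos E J hE0 hs _
  have hhval : ∀ a, h a = ∑' n : Fin m → ℤ, Real.exp (-(B (latJ ι (T n) + a) (latJ ι (T n) + a) + R n)) := by
    intro a
    simp only [hh, thF]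
    apply tsum_congr
    intro n
    rw [hJ]
    simp [E]
  have hhsum : ∀ a, Summable (fun n : Fin m → ℤ => Real.exp (-(B (latJ ι (T n) + a) (latJ ι (T n) + a) + R n))) := by
    intro a
    refine Summable.of_nonneg_of_le (fun _ => (Real.exp_pos _).le) (fun n => ?_) (hs (a, 0))
    apply Real.exp_le_exp.2
    have h1 := hE0 (J n + (a, 0))
    have h3 : E (J n + (a, 0)) = B (latJ ι (T n) + a) (latJ ι (T n) + a) + R (n + 0) := rfl
    rw [add_zero] at h3
    rw [h3] at h1 ⊢
    linarith
  have hRs : Summable (fun n : Fin m → ℤ => Real.exp (-R n)) := by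
    refine Summable.of_nonneg_of_le (fun _ => (Real.exp_pos _).le) (fun n => ?_) (summable_gauss c' hc')
    exact Real.exp_le_exp.2 (by linarith [hRlow n])
  set ZR := ∑' n : Fin m → ℤ, Real.exp (-R n) with hZR
  have hZRpos : 0 < ZR := hRs.tsum_pos (fun _ => (Real.exp_pos _).le) 0 (Real.exp_pos _)
  have hsumh : ∀ a, HasSum (fun φ => h (latJ ι φ + a)) (thF (fun x => B x x) (latJ ι) a * ZR) := by
    intro a
    have hQs := B_summable' B c hc hB a
    have hp : Summable (fun p : (ι → ℤ) × (Fin m → ℤ) => Real.exp (-(B (latJ ι p.1 + a) (latJ ι p.1 + a))) * Real.exp (-R p.2)) :=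
      Summable.mul_of_nonneg (f := fun φ : ι → ℤ => Real.exp (-(B (latJ ι φ + a) (latJ ι φ + a))))
        (g := fun n : Fin m → ℤ => Real.exp (-R n)) hQs hRs (fun _ => (Real.exp_pos _).le) (fun _ => (Real.exp_pos _).le)
    have hp2 := hp.hasSum
    rw [← hQs.tsum_mul_tsum hRs hp] at hp2
    let e : (ι → ℤ) × (Fin m → ℤ) ≃ (ι → ℤ) × (Fin m → ℤ) :=
      { toFun := fun p => (T p.2 + p.1, p.2)
        invFun := fun p => (p.1 - T p.2, p.2)
        left_inv := fun p => by simp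
        right_inv := fun p => by simp }
    rw [← e.hasSum_iff] at hp2
    refine HasSum.prod_fiberwise hp2 (fun φ => ?_)
    rw [hhval]
    refine (hhsum (latJ ι φ + a)).hasSum.congr_fun (fun n => ?_)
    simp only [e, Function.comp, Equiv.coe_fn_mk]
    rw [← Real.exp_add, map_add (latJ ι), add_assoc]
    congr 1
    ring
  have hkey : ∀ φ, 2 * (h z * h (latJ ι φ)) ≤ h 0 * (h (latJ ι φ + z) + h (latJ ι φ + -z)) := by
    intro φ
    have hk := thF_key E J hE0 hEpar hs (latJ ι φ, 0) (z, 0)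
    have e1 : ((latJ ι φ, 0) + (z, 0) : (ι → ℝ) × (Fin m → ℤ)) = (latJ ι φ + z, 0) := by simp
    have e2 : ((latJ ι φ, 0) - (z, 0) : (ι → ℝ) × (Fin m → ℤ)) = (latJ ι φ + -z, 0) := by
      simp [sub_eq_add_neg]
    have e3 : (0 : (ι → ℝ) × (Fin m → ℤ)) = (0, 0) := rfl
    rw [e1, e2, e3] at hk
    change (h (latJ ι φ) * h z)^2 ≤ (h (latJ ι φ + z) * h 0) * (h (latJ ι φ + -z) * h 0) at hk
    have p0 := hhpos 0
    have p1 := hhpos (latJ ι φ + z)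
    have p2 := hhpos (latJ ι φ + -z)
    apply nonneg_le_nonneg_of_sq_le_sq (by positivity)
    nlinarith [sq_nonneg (h 0 * (h (latJ ι φ + z) - h (latJ ι φ + -z)))]
  have hfin := hasSum_le hkey (((hsumh 0).congr_fun (g := fun φ => h (latJ ι φ)) (fun φ => by simp)).mul_left (h z) |>.mul_left 2)
    (((hsumh z).add (hsumh (-z))).mul_left (h 0))
  have h00 : h 0 = ∑' n : Fin m → ℤ, Real.exp (-(C * ∑ i, (n i : ℝ)^2)) := by
    rw [hhval]
    apply tsum_congr
    intro n
    simp [R]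
  rw [← h00]
  rw [hhval z] at hfin
  simp only [R] at hfin
  refine le_of_mul_le_mul_right ?_ hZRpos
  linarith

theorem gauss_lower (B : (ι → ℝ) →ₗ[ℝ] (ι → ℝ) →ₗ[ℝ] ℝ) (c : ℝ) (hsym : ∀ x y, B x y = B y x) (hc : 0 < c)
    (hB : ∀ x, c * ∑ i, (x i)^2 ≤ B x x) (m : ℕ) (T : (Fin m → ℤ) →+ (ι → ℤ)) (C c' : ℝ) (hC : 0 < C) (hc' : 0 < c')
    (hT : ∀ n, B (latJ ι (T n)) (latJ ι (T n)) + c' * ∑ i, (n i : ℝ)^2 ≤ C * ∑ i, (n i : ℝ)^2)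
    (o : ι) (hTo : ∀ n, T n o = ∑ i, n i) :
    m * (Real.exp (-C) / ∑' k : ℤ, Real.exp (-(C * (k:ℝ)^2))) *
      ∑' φ : ι → ℤ, Real.exp (-(B (latJ ι φ) (latJ ι φ))) ≤
    ∑' φ : ι → ℤ, (φ o : ℝ)^2 * Real.exp (-(B (latJ ι φ) (latJ ι φ))) := by
  obtain ⟨s, hs⟩ := riesz B c hc hB o
  set θ := ∑' k : ℤ, Real.exp (-(C * (k:ℝ)^2)) with hθ
  have hθpos : 0 < θ := (summable_gauss1 C hC).tsum_pos (fun _ => (Real.exp_pos _).le) 0 (Real.exp_pos _)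
  have hZ0 : thF (fun x => B x x) (latJ ι) 0 = ∑' φ : ι → ℤ, Real.exp (-(B (latJ ι φ) (latJ ι φ))) := by
    simp [thF]
  have hsZ : Summable (fun φ : ι → ℤ => Real.exp (-(B (latJ ι φ) (latJ ι φ)))) := by
    simpa using B_summable' B c hc hB 0
  set Z := ∑' φ : ι → ℤ, Real.exp (-(B (latJ ι φ) (latJ ι φ))) with hZ
  have hZpos : 0 < Z := hsZ.tsum_pos (fun _ => (Real.exp_pos _).le) 0 (Real.exp_pos _)
  set v := Real.exp (-C) / θ with hv
  have hvpos : 0 < v := by positivity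
  -- domination
  have hdom : Summable (fun φ : ι → ℤ => (4/c) * Real.exp (-((c/4) * ∑ i, (φ i : ℝ)^2))) :=
    (summable_gauss (c/4) (by positivity)).mul_left _
  have hbound : ∀ t, t ≤ c/2 → ∀ φ : ι → ℤ, (φ o : ℝ)^2 * Real.exp (t * (φ o : ℝ)^2) * Real.exp (-(B (latJ ι φ) (latJ ι φ)))
      ≤ (4/c) * Real.exp (-((c/4) * ∑ i, (φ i : ℝ)^2)) := by
    intro t ht φ
    have h1 := hB (latJ ι φ)
    simp only [latJ_apply] at h1
    have h2 : (φ o : ℝ)^2 ≤ ∑ i, (φ i : ℝ)^2 :=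
      Finset.single_le_sum (f := fun i => (φ i : ℝ)^2) (fun i _ => sq_nonneg _) (Finset.mem_univ o)
    have h3 : (φ o : ℝ)^2 ≤ (4/c) * Real.exp ((c/4) * (φ o : ℝ)^2) := by
      have := Real.add_one_le_exp ((c/4) * (φ o : ℝ)^2)
      have h4 : (4/c) * ((c/4) * (φ o : ℝ)^2) = (φ o : ℝ)^2 := by field_simp
      calc (φ o : ℝ)^2 = (4/c) * ((c/4) * (φ o : ℝ)^2) := h4.symm
        _ ≤ _ := mul_le_mul_of_nonneg_left (by linarith) (by positivity)
    calc _ ≤ (4/c) * Real.exp ((c/4) * (φ o : ℝ)^2) * Real.exp (t * (φ o : ℝ)^2) * Real.exp (-(B (latJ ι φ) (latJ ι φ))) := by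
          gcongr
      _ = (4/c) * Real.exp ((c/4) * (φ o : ℝ)^2 + t * (φ o : ℝ)^2 + -(B (latJ ι φ) (latJ ι φ))) := by
          rw [Real.exp_add, Real.exp_add]; ring
      _ ≤ _ := by
          apply mul_le_mul_of_nonneg_left _ (by positivity)
          apply Real.exp_le_exp.2
          have := mul_le_mul_of_nonneg_right ht (sq_nonneg (φ o : ℝ))
          have := mul_le_mul_of_nonneg_left h2 hc.le
          linarith
  have hsumt : ∀ t, t ≤ c/2 → Summable (fun φ : ι → ℤ => (φ o : ℝ)^2 * Real.exp (t * (φ o : ℝ)^2) * Real.exp (-(B (latJ ι φ) (latJ ι φ)))) :=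
    fun t ht => Summable.of_nonneg_of_le (fun φ => by positivity) (hbound t ht) hdom
  have main : ∀ t, 0 < t → t ≤ c/2 → m * v * Z ≤ ∑' φ : ι → ℤ, (φ o : ℝ)^2 * Real.exp (t * (φ o : ℝ)^2) * Real.exp (-(B (latJ ι φ) (latJ ι φ))) := by
    intro t ht0 ht
    set e := Real.sqrt (t/2) with he
    have he2 : e^2 = t/2 := Real.sq_sqrt (by positivity)
    have hcmp := gauss_compare B c hc hB m T C c' hc' hT (e • s)
    rw [hZ0] at hcmp
    have hcosh := B_hasSum_cosh B c hsym hc hB (e • s)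
    have e1 : ∑' n : Fin m → ℤ, Real.exp (-(B (latJ ι (T n) + e • s) (latJ ι (T n) + e • s) + (C * ∑ i, (n i : ℝ)^2 - B (latJ ι (T n)) (latJ ι (T n)))))
        = Real.exp (-B (e • s) (e • s)) * (∑' k : ℤ, Real.exp (-(C * (k:ℝ)^2) - 2 * e * k))^m := by
      rw [← theta_prod C e hC, ← tsum_mul_left]
      apply tsum_congr
      intro n
      rw [← Real.exp_add, B_add B hsym]
      congr 1
      have : B (e • s) (latJ ι (T n)) = e * ∑ i, (n i : ℝ) := by
        simp only [map_smul, LinearMap.smul_apply, smul_eq_mul, hs, latJ_apply, hTo]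
        push_cast; rfl
      rw [this]
      ring
    have e2 : ∑' n : Fin m → ℤ, Real.exp (-(C * ∑ i, (n i : ℝ)^2)) = θ^m := by
      have := theta_prod (m := m) C 0 hC
      simpa using this
    rw [e1, e2] at hcmp
    have hth := theta_lower C e hC
    rw [← hθ] at hth
    have hpow : (θ * (1 + 2 * e^2 * v))^m ≤ (∑' k : ℤ, Real.exp (-(C * (k:ℝ)^2) - 2 * e * k))^m := by
      apply pow_le_pow_left₀ (by positivity)
      refine le_trans (le_of_eq ?_) hth
      rw [hv]; field_simp
    have hber : 1 + m * (2 * e^2 * v) ≤ (1 + 2 * e^2 * v)^m :=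
      one_add_mul_le_pow (by have : 0 ≤ 2 * e^2 * v := by positivity
                             linarith) m
    rw [mul_pow] at hpow
    set S1 := thF (fun x => B x x) (latJ ι) (e • s) + thF (fun x => B x x) (latJ ι) (-(e • s)) with hS1
    set b := B (e • s) (e • s)
    set P := (∑' k : ℤ, Real.exp (-(C * (k:ℝ)^2) - 2 * e * k))^m
    have hθm : 0 < θ^m := by positivity
    have hexp : Real.exp b * Real.exp (-b) = 1 := by rw [← Real.exp_add]; simp
    -- (1 + m 2 e² v) Z ≤ exp b / 2 * S1
    have hfin : (1 + m * (2 * e^2 * v)) * Z ≤ Real.exp b / 2 * S1 := by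
      refine le_of_mul_le_mul_left ?_ hθm
      have a1 : θ^m * ((1 + m * (2 * e^2 * v)) * Z) ≤ P * Z := by
        rw [← mul_assoc]
        exact mul_le_mul_of_nonneg_right (le_trans (mul_le_mul_of_nonneg_left hber hθm.le) hpow) hZpos.le
      have a2 := mul_le_mul_of_nonneg_left hcmp (by positivity : 0 ≤ Real.exp b / 2)
      have a3 : Real.exp b / 2 * (2 * (Real.exp (-b) * P) * Z) = P * Z := by
        linear_combination (P * Z) * hexp
      rw [a3] at a2
      linarith
    have hup := hasSum_le (fun φ => ?_) hcosh (hsZ.hasSum.add ((hsumt t ht).hasSum.mul_left t))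
    · rw [he2] at hfin
      have : t * (m * v * Z) ≤ t * ∑' φ : ι → ℤ, (φ o : ℝ)^2 * Real.exp (t * (φ o : ℝ)^2) * Real.exp (-(B (latJ ι φ) (latJ ι φ))) := by
        have := hfin.trans hup
        rw [← hZ] at this
        linarith
      exact le_of_mul_le_mul_left this ht0
    · simp only [map_smul, LinearMap.smul_apply, smul_eq_mul, hs, latJ_apply]
      have h1 := cosh_upper (e * φ o)
      have h2 : 2 * (e * (φ o : ℝ))^2 = t * (φ o : ℝ)^2 := by rw [mul_pow, he2]; ring
      rw [h2] at h1
      have := mul_le_mul_of_nonneg_left h1 (Real.exp_pos (-(B (latJ ι φ) (latJ ι φ)))).le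
      refine this.trans (le_of_eq ?_)
      ring
  have hlim : Filter.Tendsto (fun t : ℝ => ∑' φ : ι → ℤ, (φ o : ℝ)^2 * Real.exp (t * (φ o : ℝ)^2) * Real.exp (-(B (latJ ι φ) (latJ ι φ))))
      (nhdsWithin 0 (Set.Ioi 0)) (nhds (∑' φ : ι → ℤ, (φ o : ℝ)^2 * Real.exp (-(B (latJ ι φ) (latJ ι φ))))) := by
    refine tendsto_tsum_of_dominated_convergence hdom (fun φ => ?_) ?_
    · have : Continuous (fun t : ℝ => (φ o : ℝ)^2 * Real.exp (t * (φ o : ℝ)^2) * Real.exp (-(B (latJ ι φ) (latJ ι φ)))) := by fun_prop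
      have h := (this.tendsto 0).mono_left (nhdsWithin_le_nhds (s := Set.Ioi 0))
      simpa using h
    · filter_upwards [Ioo_mem_nhdsGT (show (0:ℝ) < c/2 by positivity)] with t ht φ
      rw [Real.norm_of_nonneg (by positivity)]
      exact hbound t ht.2.le φ
  refine ge_of_tendsto hlim ?_
  filter_upwards [Ioo_mem_nhdsGT (show (0:ℝ) < c/2 by positivity)] with t ht
  exact main t ht.1 ht.2.le

end lower


/-- coupling weights -/
noncomputable def cW (α : ℝ) (r : ℤ) : ℝ := (|(r:ℝ)| ^ α)⁻¹

theorem cW_nonneg (α : ℝ) (r : ℤ) : 0 ≤ cW α r := by unfold cW; positivity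

theorem cW_neg (α : ℝ) (r : ℤ) : cW α (-r) = cW α r := by simp [cW]

theorem cW_summable (α : ℝ) (hα : 1 < α) : Summable (cW α) := by
  refine (Real.summable_abs_int_rpow hα).congr (fun r => ?_)
  rw [cW, Real.rpow_neg (abs_nonneg _)]

/-- bilinear term -/
noncomputable def cT (α : ℝ) (x y : ℤ → ℝ) (p : ℤ × ℤ) : ℝ :=
  (x p.1 - x p.2) * (y p.1 - y p.2) * cW α (p.1 - p.2)

/-- bilinear energy -/
noncomputable def cE (α : ℝ) (x y : ℤ → ℝ) : ℝ := ∑' p, cT α x y p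

theorem cT_self_nonneg (α : ℝ) (x : ℤ → ℝ) (p : ℤ × ℤ) : 0 ≤ cT α x x p :=
  mul_nonneg (mul_self_nonneg _) (cW_nonneg _ _)

theorem cT_self_summable (α : ℝ) (hα : 1 < α) (N : ℕ) (x : ℤ → ℝ) (hx : ∀ k : ℤ, (N:ℤ) < |k| → x k = 0) :
    Summable (cT α x x) := by
  have hxs : Summable (fun k => (x k)^2) := by
    apply summable_of_hasFiniteSupport
    apply (Set.finite_Icc (-(N:ℤ)) N).subset
    intro k hk
    rw [Function.mem_support] at hk
    rw [Set.mem_Icc, ← abs_le]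
    by_contra h
    exact hk (by rw [hx k (by omega)]; simp)
  have h1 : Summable (fun p : ℤ × ℤ => (x p.1)^2 * cW α p.2) :=
    Summable.mul_of_nonneg (f := fun k => (x k)^2) (g := cW α) hxs (cW_summable α hα)
      (fun k => sq_nonneg _) (fun r => cW_nonneg α r)
  let e : ℤ × ℤ ≃ ℤ × ℤ :=
    { toFun := fun p => (p.1, p.1 - p.2)
      invFun := fun p => (p.1, p.1 - p.2)
      left_inv := fun p => by simp
      right_inv := fun p => by simp }
  have h2 : Summable (fun p : ℤ × ℤ => (x p.1)^2 * cW α (p.1 - p.2)) := (e.summable_iff).2 h1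
  have h3 : Summable (fun p : ℤ × ℤ => (x p.2)^2 * cW α (p.1 - p.2)) := by
    have := ((Equiv.prodComm ℤ ℤ).summable_iff).2 h2
    refine this.congr (fun p => ?_)
    simp only [Function.comp, Equiv.prodComm_apply, Prod.fst_swap, Prod.snd_swap]
    rw [← cW_neg α (p.1 - p.2), neg_sub]
  refine Summable.of_nonneg_of_le (cT_self_nonneg α x) (fun p => ?_) ((h2.mul_left 2).add (h3.mul_left 2))
  have := cW_nonneg α (p.1 - p.2)
  unfold cT
  nlinarith [mul_nonneg (sq_nonneg (x p.1 + x p.2)) this]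

theorem cT_summable (α : ℝ) (hα : 1 < α) (N : ℕ) (x y : ℤ → ℝ) (hx : ∀ k : ℤ, (N:ℤ) < |k| → x k = 0)
    (hy : ∀ k : ℤ, (N:ℤ) < |k| → y k = 0) :
    Summable (cT α x y) := by
  refine Summable.of_norm_bounded ((cT_self_summable α hα N x hx).add (cT_self_summable α hα N y hy)) (fun p => ?_)
  rw [Real.norm_eq_abs]
  have := cW_nonneg α (p.1 - p.2)
  unfold cT
  rw [abs_mul, abs_of_nonneg this, ← add_mul]
  apply mul_le_mul_of_nonneg_right _ this
  rw [abs_le]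
  constructor <;> nlinarith [sq_nonneg (x p.1 - x p.2 + (y p.1 - y p.2)), sq_nonneg (x p.1 - x p.2 - (y p.1 - y p.2)), mul_self_nonneg (x p.1 - x p.2), mul_self_nonneg (y p.1 - y p.2)]

/-- index set -/
abbrev cI (N : ℕ) := ↥(Finset.Icc (-(N:ℤ)) (N:ℤ))

/-- extension by zero -/
noncomputable def cExt (N : ℕ) {R : Type*} [Zero R] (x : cI N → R) (k : ℤ) : R :=
  if h : k ∈ Finset.Icc (-(N:ℤ)) (N:ℤ) then x ⟨k, h⟩ else 0

theorem cExt_zero (N : ℕ) {R : Type*} [Zero R] (x : cI N → R) (k : ℤ) (hk : (N:ℤ) < |k|) : cExt N x k = 0 := by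
  unfold cExt
  rw [dif_neg]
  rw [Finset.mem_Icc, ← abs_le]
  omega

theorem cExt_mem (N : ℕ) {R : Type*} [Zero R] (x : cI N → R) (k : cI N) : cExt N x k = x k := by
  unfold cExt
  rw [dif_pos k.2]

theorem cExt_add (N : ℕ) (x y : cI N → ℝ) (k : ℤ) : cExt N (x + y) k = cExt N x k + cExt N y k := by
  unfold cExt
  split_ifs <;> simp

theorem cExt_smul (N : ℕ) (a : ℝ) (x : cI N → ℝ) (k : ℤ) : cExt N (a • x) k = a * cExt N x k := by
  unfold cExt
  split_ifs <;> simp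

/-- bilinear form of the chain -/
noncomputable def cB (β α : ℝ) (hα : 1 < α) (N : ℕ) : (cI N → ℝ) →ₗ[ℝ] (cI N → ℝ) →ₗ[ℝ] ℝ :=
  LinearMap.mk₂ ℝ (fun x y => β * cE α (cExt N x) (cExt N y))
    (fun x x' y => by
      rw [← mul_add]; congr 1
      unfold cE
      rw [← Summable.tsum_add (cT_summable α hα N _ _ (cExt_zero N x) (cExt_zero N y)) (cT_summable α hα N _ _ (cExt_zero N x') (cExt_zero N y))]
      apply tsum_congr
      intro p
      simp only [cT, cExt_add]; ring)
    (fun a x y => by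
      unfold cE
      rw [smul_eq_mul, mul_left_comm]; congr 1
      rw [← tsum_mul_left]
      apply tsum_congr
      intro p
      simp only [cT, cExt_smul]; ring)
    (fun x y y' => by
      rw [← mul_add]; congr 1
      unfold cE
      rw [← Summable.tsum_add (cT_summable α hα N _ _ (cExt_zero N x) (cExt_zero N y)) (cT_summable α hα N _ _ (cExt_zero N x) (cExt_zero N y'))]
      apply tsum_congr
      intro p
      simp only [cT, cExt_add]; ring)
    (fun a x y => by
      unfold cE
      rw [smul_eq_mul, mul_left_comm]; congr 1
      rw [← tsum_mul_left]
      apply tsum_congr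
      intro p
      simp only [cT, cExt_smul]; ring)

theorem cB_apply (β α : ℝ) (hα : 1 < α) (N : ℕ) (x y : cI N → ℝ) :
    cB β α hα N x y = β * cE α (cExt N x) (cExt N y) := rfl

theorem cB_symm (β α : ℝ) (hα : 1 < α) (N : ℕ) (x y : cI N → ℝ) :
    cB β α hα N x y = cB β α hα N y x := by
  rw [cB_apply, cB_apply]
  congr 1
  apply tsum_congr
  intro p
  simp only [cT]; ring

theorem cT_lower (α : ℝ) (x : ℤ → ℝ) (i j : ℤ) (L : ℝ) (hα : 0 < α) (hL : |((i - j : ℤ):ℝ)| ≤ L) (hij : i ≠ j) :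
    (x i - x j)^2 ≤ L^α * cT α x x (i, j) := by
  unfold cT cW
  have hpos : 0 < |((i - j : ℤ):ℝ)| := abs_pos.2 (by exact_mod_cast sub_ne_zero.2 hij)
  have h1 : |((i - j : ℤ):ℝ)|^α ≤ L^α := Real.rpow_le_rpow hpos.le hL hα.le
  have h2 : 0 < |((i - j : ℤ):ℝ)|^α := by positivity
  simp only
  rw [← mul_assoc, ← div_eq_mul_inv, le_div_iff₀ h2]
  nlinarith [sq_nonneg (x i - x j)]

theorem cB_coercive (β α : ℝ) (hβ : 0 < β) (hα : 1 < α) (N : ℕ) :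
    ∃ c, 0 < c ∧ ∀ x, c * ∑ i, (x i)^2 ≤ cB β α hα N x x := by
  have hL : (0:ℝ) < (2*N+1:ℝ)^α := by positivity
  have hcard : 0 < (Fintype.card (cI N) : ℝ) + 1 := by positivity
  refine ⟨β / ((Fintype.card (cI N) + 1) * (2*N+1:ℝ)^α), by positivity, fun x => ?_⟩
  rw [cB_apply]
  have h1 : ∀ i, (x i)^2 ≤ (2*N+1:ℝ)^α * cE α (cExt N x) (cExt N x) := by
    intro i
    have hi := Finset.mem_Icc.1 i.2
    have h := cT_lower α (cExt N x) i (N+1) (2*N+1) (by linarith) (by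
      rw [← Int.cast_abs]
      have : |(i:ℤ) - (N+1)| ≤ 2*N+1 := by rw [abs_le]; constructor <;> omega
      exact_mod_cast this) (by omega)
    rw [cExt_mem, cExt_zero N x (N+1) (by rw [abs_of_nonneg] <;> omega), sub_zero] at h
    refine h.trans (mul_le_mul_of_nonneg_left ?_ hL.le)
    exact (cT_self_summable α hα N _ (cExt_zero N x)).le_tsum _ (fun p _ => cT_self_nonneg α _ p)
  have hE : 0 ≤ cE α (cExt N x) (cExt N x) := tsum_nonneg (cT_self_nonneg α _)
  have h2 : ∑ i, (x i)^2 ≤ (Fintype.card (cI N) + 1) * ((2*N+1:ℝ)^α * cE α (cExt N x) (cExt N x)) := by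
    calc ∑ i, (x i)^2 ≤ ∑ i : cI N, ((2*N+1:ℝ)^α * cE α (cExt N x) (cExt N x)) := Finset.sum_le_sum fun i _ => h1 i
      _ = Fintype.card (cI N) * ((2*N+1:ℝ)^α * cE α (cExt N x) (cExt N x)) := by simp
      _ ≤ _ := by
        apply mul_le_mul_of_nonneg_right (by linarith) (by positivity)
  rw [div_mul_eq_mul_div, div_le_iff₀ (by positivity)]
  nlinarith

/-- dyadic averages -/
noncomputable def dyA (x : ℤ → ℝ) (k : ℕ) : ℝ := (∑ i ∈ Finset.Ico (2^k) (2^(k+1)), x ((i:ℕ):ℤ)) / 2^k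

theorem dy_step (α : ℝ) (hα : 2 < α) (x : ℤ → ℝ) (hs : Summable (cT α x x)) (k : ℕ) :
    |dyA x k - dyA x (k+1)| ≤ 2^α * ((2:ℝ)^((α-2)/2))^k * Real.sqrt (cE α x x) := by
  set I := Finset.Ico (2^k) (2^(k+1)) with hI
  set J := Finset.Ico (2^(k+1)) (2^(k+1+1)) with hJ
  have cI' : I.card = 2^k := by rw [hI, Nat.card_Ico, pow_succ]; omega
  have cJ : J.card = 2^(k+1) := by rw [hJ, Nat.card_Ico, pow_succ 2 (k+1)]; omega
  have hE : 0 ≤ cE α x x := tsum_nonneg (cT_self_nonneg α _)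
  have e1 : ((2:ℝ)^k * 2^(k+1)) * (dyA x k - dyA x (k+1)) = ∑ p ∈ I ×ˢ J, (x (p.1:ℤ) - x (p.2:ℤ)) := by
    rw [Finset.sum_product]
    simp only [Finset.sum_sub_distrib, Finset.sum_const, cI', cJ, nsmul_eq_mul, ← Finset.mul_sum]
    unfold dyA
    rw [← hI, ← hJ]
    push_cast
    field_simp
  have e2 := sq_sum_le_card_mul_sum_sq (s := I ×ˢ J) (f := fun p : ℕ × ℕ => x (p.1:ℤ) - x (p.2:ℤ))
  rw [← e1, Finset.card_product, cI', cJ] at e2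
  have e3 : ∑ p ∈ I ×ˢ J, (x (p.1:ℤ) - x (p.2:ℤ))^2 ≤ ((2:ℝ)^(k+2))^α * cE α x x := by
    calc ∑ p ∈ I ×ˢ J, (x (p.1:ℤ) - x (p.2:ℤ))^2 ≤ ∑ p ∈ I ×ˢ J, ((2:ℝ)^(k+2))^α * cT α x x ((p.1:ℤ), (p.2:ℤ)) := by
          apply Finset.sum_le_sum
          rintro ⟨i, j⟩ hp
          rw [Finset.mem_product] at hp
          simp only [hI, hJ, Finset.mem_Ico] at hp
          apply cT_lower α x _ _ _ (by linarith)
          · rw [← Int.cast_abs]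
            have h4 : |(i:ℤ) - j| ≤ 2^(k+2) := by
              have : (j:ℤ) < 2^(k+2) := by exact_mod_cast hp.2.2
              have : (i:ℤ) < 2^(k+1) := by exact_mod_cast hp.1.2
              have : (2:ℤ)^(k+2) = 2 * 2^(k+1) := by ring
              rw [abs_le]; constructor <;> omega
            exact_mod_cast h4
          · have : i < j := lt_of_lt_of_le hp.1.2 hp.2.1
            exact_mod_cast this.ne
      _ = ((2:ℝ)^(k+2))^α * ∑ p ∈ I ×ˢ J, cT α x x ((p.1:ℤ), (p.2:ℤ)) := by rw [Finset.mul_sum]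
      _ ≤ _ := by
        apply mul_le_mul_of_nonneg_left _ (by positivity)
        let f : ℕ × ℕ ↪ ℤ × ℤ := ⟨fun p => ((p.1:ℤ), (p.2:ℤ)), fun a b h => by
          simp only [Prod.mk.injEq, Nat.cast_inj] at h
          exact Prod.ext h.1 h.2⟩
        have : ∑ p ∈ I ×ˢ J, cT α x x ((p.1:ℤ), (p.2:ℤ)) = ∑ q ∈ (I ×ˢ J).map f, cT α x x q := by
          rw [Finset.sum_map]; rfl
        rw [this]
        exact hs.sum_le_tsum _ (fun p _ => cT_self_nonneg α _ p)
  set d := dyA x k - dyA x (k+1)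
  set u := (2:ℝ)^k with hu
  have hupos : 0 < u := by positivity
  have e4 : (2:ℝ)^(k+1) = 2 * u := by rw [hu]; ring
  have e5 : (2:ℝ)^(k+2) = 4 * u := by rw [hu]; ring
  rw [e5] at e3
  push_cast at e2
  rw [e4] at e2
  have e6 : u * (2*u) * d^2 ≤ (4*u)^α * cE α x x := by
    have h7 : 0 < u * (2*u) := by positivity
    have h8 : (u * (2*u)) * (u * (2*u) * d^2) ≤ (u * (2*u)) * ((4*u)^α * cE α x x) := by
      calc (u * (2*u)) * (u * (2*u) * d^2) = (u * (2*u) * d)^2 := by ring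
        _ ≤ _ := e2
        _ ≤ _ := mul_le_mul_of_nonneg_left e3 h7.le
    exact le_of_mul_le_mul_left h8 h7
  have e7 : (4*u)^α = (2^α)^2 * (u^2 * (((2:ℝ)^((α-2)/2))^k)^2) := by
    have : (((2:ℝ)^((α-2)/2))^k)^2 = u^(α-2) := by
      rw [hu, ← Real.rpow_natCast, ← Real.rpow_natCast, ← Real.rpow_natCast, ← Real.rpow_mul (by positivity),
        ← Real.rpow_mul (by positivity), ← Real.rpow_mul (by positivity)]
      congr 1; push_cast; ring
    rw [this, Real.mul_rpow (by norm_num) hupos.le]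
    have h4 : (4:ℝ)^α = (2^α)^2 := by
      rw [← Real.rpow_natCast, ← Real.rpow_mul (by norm_num), mul_comm, Real.rpow_mul (by norm_num)]
      norm_num
    rw [h4]
    have : u^α = u^2 * u^(α-2) := by
      rw [← Real.rpow_natCast u 2, ← Real.rpow_add hupos]; congr 1; push_cast; ring
    rw [this]
  rw [e7] at e6
  apply abs_le_of_sq_le_sq _ (by positivity)
  rw [mul_pow, mul_pow, Real.sq_sqrt hE]
  have h9 : 0 ≤ (2^α)^2 * (((2:ℝ)^((α-2)/2))^k)^2 * cE α x x := by positivity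
  have hu2 : 0 < u^2 := by positivity
  refine le_of_mul_le_mul_left ?_ hu2
  nlinarith

theorem sobolev (α : ℝ) (hα : 2 < α) (hα3 : α < 3) : ∃ K, 0 < K ∧ ∀ (N : ℕ), 1 ≤ N → ∀ x : ℤ → ℝ,
    (∀ k : ℤ, (N:ℤ) < |k| → x k = 0) → (x 0)^2 ≤ K * (N:ℝ)^(α-2) * cE α x x := by
  set q := (2:ℝ)^((α-2)/2) with hq
  have hq1 : 1 < q := Real.one_lt_rpow (by norm_num) (by linarith)
  have hq2 : q < 2 := by
    calc q < (2:ℝ)^(1:ℝ) := Real.rpow_lt_rpow_of_exponent_lt (by norm_num) (by linarith)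
      _ = 2 := by simp
  have h2α : (1:ℝ) ≤ 2^α := Real.one_le_rpow (by norm_num) (by linarith)
  set D := 2^α / (q - 1) with hD
  have hD1 : 1 ≤ D := by
    rw [hD, le_div_iff₀ (by linarith)]; linarith
  have hDq : D * (q - 1) = 2^α := by rw [hD]; field_simp [(by linarith : q - 1 ≠ 0)]
  refine ⟨D^2 * q^2, by positivity, fun N hN x hx => ?_⟩
  have hs := cT_self_summable α (by linarith) N x hx
  have hE : 0 ≤ cE α x x := tsum_nonneg (cT_self_nonneg α _)
  have ind : ∀ k : ℕ, |x 0 - dyA x k| ≤ D * q^k * Real.sqrt (cE α x x) := by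
    intro k
    induction k with
    | zero =>
      have h0 : dyA x 0 = x 1 := by simp [dyA]
      rw [h0]
      apply abs_le_of_sq_le_sq _ (by positivity)
      rw [mul_pow, Real.sq_sqrt hE]
      have h1 := cT_lower α x 0 1 1 (by linarith) (by norm_num) (by norm_num)
      rw [Real.one_rpow, one_mul] at h1
      have h2 : cT α x x (0,1) ≤ cE α x x := hs.le_tsum _ (fun p _ => cT_self_nonneg α _ p)
      have h3 : 1 ≤ (D * q^0)^2 := by rw [pow_zero, mul_one]; nlinarith
      nlinarith
    | succ k ih =>
      have h1 := dy_step α hα x hs k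
      have h2 := abs_sub_le (x 0) (dyA x k) (dyA x (k+1))
      rw [← hq] at h1
      have : D * q^(k+1) * Real.sqrt (cE α x x) = D * q^k * Real.sqrt (cE α x x) + 2^α * q^k * Real.sqrt (cE α x x) := by
        rw [← hDq]; ring
      linarith
  have hlast : dyA x (Nat.log 2 N + 1) = 0 := by
    unfold dyA
    rw [Finset.sum_eq_zero, zero_div]
    intro i hi
    rw [Finset.mem_Ico] at hi
    apply hx
    have := Nat.lt_pow_succ_log_self (b := 2) (by norm_num) N
    rw [abs_of_nonneg (by positivity)]
    have : N < i := by simp only [Nat.succ_eq_add_one] at this; omega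
    exact_mod_cast this
  have h := ind (Nat.log 2 N + 1)
  rw [hlast, sub_zero] at h
  have h2 : (x 0)^2 ≤ (D * q^(Nat.log 2 N + 1) * Real.sqrt (cE α x x))^2 := by
    rw [← sq_abs]; exact pow_le_pow_left₀ (abs_nonneg _) h 2
  rw [mul_pow, Real.sq_sqrt hE] at h2
  refine h2.trans (mul_le_mul_of_nonneg_right ?_ hE)
  have h3 : (q^(Nat.log 2 N))^2 ≤ (N:ℝ)^(α-2) := by
    have : (q^(Nat.log 2 N))^2 = ((2:ℝ)^(Nat.log 2 N))^(α-2) := by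
      rw [hq, ← Real.rpow_natCast, ← Real.rpow_natCast, ← Real.rpow_natCast, ← Real.rpow_mul (by positivity),
        ← Real.rpow_mul (by positivity), ← Real.rpow_mul (by positivity)]
      congr 1; push_cast; ring
    rw [this]
    apply Real.rpow_le_rpow (by positivity) _ (by linarith)
    exact_mod_cast Nat.pow_log_le_self 2 (by omega)
  calc (D * q^(Nat.log 2 N + 1))^2 = D^2 * q^2 * (q^(Nat.log 2 N))^2 := by ring
    _ ≤ _ := mul_le_mul_of_nonneg_left h3 (by positivity)


theorem powA (p : ℝ) (hp : 0 < p) (hp1 : p ≤ 1) (M : ℝ) (hM : 0 ≤ M) :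
    p * (M+1)^(p-1) ≤ (M+1)^p - M^p := by
  have h1 : 0 < M + 1 := by linarith
  have hb := rpow_one_add_le_one_add_mul_self (s := -1/(M+1)) (by
    rw [le_div_iff₀ h1]; linarith) hp.le hp1
  have e1 : 1 + -1/(M+1) = M/(M+1) := by field_simp; ring
  rw [e1, Real.div_rpow hM h1.le, div_le_iff₀ (by positivity)] at hb
  have e2 : (M+1)^(p-1) = (M+1)^p / (M+1) := by rw [Real.rpow_sub h1, Real.rpow_one]
  rw [e2]
  have e3 : (1 + p * (-1/(M+1))) * (M+1)^p = (M+1)^p - p * ((M+1)^p/(M+1)) := by field_simp; ring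
  linarith

theorem powB (q : ℝ) (hq : 0 < q) (hq1 : q ≤ 1) (M : ℝ) (hM : 0 < M) :
    q * (M+1)^(-1-q) ≤ M^(-q) - (M+1)^(-q) := by
  have h1 : 0 < M + 1 := by linarith
  have h := powA q hq hq1 M hM.le
  rw [Real.rpow_neg hM.le, Real.rpow_neg h1.le]
  have e1 : (M+1)^(-1-q) = ((M+1)^q)⁻¹ / (M+1) := by
    rw [show -1-q = -q - 1 by ring, Real.rpow_sub h1, Real.rpow_one, Real.rpow_neg h1.le]
  have e2 : (M+1)^(q-1) = (M+1)^q / (M+1) := by rw [Real.rpow_sub h1, Real.rpow_one]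
  rw [e2] at h
  rw [e1]
  have hb : 0 < M^q := by positivity
  have ha : 0 < (M+1)^q := by positivity
  set a := (M+1)^q
  set b := M^q
  set t := q/(M+1) with ht
  have ht0 : 0 < t := by positivity
  have h' : b ≤ a * (1 - t) := by
    have : q * (a / (M+1)) = a * t := by rw [ht]; ring
    linarith
  have e3 : q * (a⁻¹ / (M+1)) = t * a⁻¹ := by rw [ht]; ring
  rw [e3]
  have : (1 + t) * a⁻¹ ≤ b⁻¹ := by
    rw [← div_eq_mul_inv, inv_eq_one_div, div_le_div_iff₀ ha hb]
    nlinarith [mul_nonneg ha.le (sq_nonneg t)]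
  linarith

theorem sum_min_bound (q : ℝ) (hq : 0 < q) (hq1 : q < 1) (N : ℕ) (hN : 1 ≤ N) (M : ℕ) :
    ∑ n ∈ Finset.range M, ((n:ℝ)+1)^(-1-q) * min 1 (((n:ℝ)+1)/N) ≤ (1/(1-q) + 1/q) * (N:ℝ)^(-q) := by
  have hNpos : (0:ℝ) < N := by exact_mod_cast hN
  have h1 : ∀ M : ℕ, M ≤ N → ∑ n ∈ Finset.range M, ((n:ℝ)+1)^(-1-q) * min 1 (((n:ℝ)+1)/N) ≤ (1/(1-q)) * ((M:ℝ)^(1-q) / N) := by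
    intro M
    induction M with
    | zero => intro _; simp; rw [Real.zero_rpow (by linarith)]; simp
    | succ M ih =>
      intro hM
      rw [Finset.sum_range_succ]
      have i1 := ih (by omega)
      have i2 := powA (1-q) (by linarith) (by linarith) M (by positivity)
      have e1 : ((M:ℝ)+1)^(-1-q) * min 1 (((M:ℝ)+1)/N) ≤ ((M:ℝ)+1)^(1-q-1) / N := by
        calc _ ≤ ((M:ℝ)+1)^(-1-q) * (((M:ℝ)+1)/N) := by gcongr; exact min_le_right _ _
          _ = _ := by
            rw [show 1 - q - 1 = (-1-q) + 1 by ring, Real.rpow_add (by positivity), Real.rpow_one]; ring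
      have e2 : ((M:ℝ)+1)^(1-q-1) / N ≤ (1/(1-q)) * ((((M:ℝ)+1)^(1-q) - (M:ℝ)^(1-q))/N) := by
        rw [← mul_div_assoc]
        gcongr
        rw [one_div, ← div_eq_inv_mul, le_div_iff₀ (by linarith)]
        linarith
      push_cast
      rw [sub_div, mul_sub] at e2
      linarith
  have hNN : (N:ℝ)^(1-q) / N = (N:ℝ)^(-q) := by
    rw [← Real.rpow_sub_one hNpos.ne']; congr 1; ring
  have h2 : ∀ M : ℕ, N ≤ M → ∑ n ∈ Finset.range M, ((n:ℝ)+1)^(-1-q) * min 1 (((n:ℝ)+1)/N) ≤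
      (1/(1-q)) * (N:ℝ)^(-q) + (1/q) * ((N:ℝ)^(-q) - (M:ℝ)^(-q)) := by
    intro M hM
    induction M, hM using Nat.le_induction with
    | base => have := h1 N le_rfl; rw [hNN] at this; linarith
    | succ M hM ih =>
      rw [Finset.sum_range_succ]
      have hMpos : (0:ℝ) < M := lt_of_lt_of_le hNpos (by exact_mod_cast hM)
      have i2 := powB q hq hq1.le M hMpos
      have e1 : ((M:ℝ)+1)^(-1-q) * min 1 (((M:ℝ)+1)/N) ≤ ((M:ℝ)+1)^(-1-q) := by
        calc _ ≤ ((M:ℝ)+1)^(-1-q) * 1 := by gcongr; exact min_le_left _ _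
          _ = _ := mul_one _
      have e2 : ((M:ℝ)+1)^(-1-q) ≤ (1/q) * ((M:ℝ)^(-q) - ((M:ℝ)+1)^(-q)) := by
        rw [one_div, ← div_eq_inv_mul, le_div_iff₀ hq]; linarith
      push_cast
      linarith
  have hq' : 0 < 1/q := by positivity
  have hq'' : 0 < 1/(1-q) := by have : 0 < 1 - q := by linarith
                                positivity
  rcases le_total M N with h | h
  · refine (h1 M h).trans ?_
    have : (M:ℝ)^(1-q)/N ≤ (N:ℝ)^(-q) := by
      rw [← hNN]; gcongr
    have h3 := mul_le_mul_of_nonneg_left this hq''.le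
    have : 0 < (1/q) * (N:ℝ)^(-q) := by positivity
    linarith
  · refine (h2 M h).trans ?_
    have : 0 ≤ (1/q) * (M:ℝ)^(-q) := by positivity
    linarith

/-- multiplicity bound -/
noncomputable def mulU (α : ℝ) (N : ℕ) (r : ℤ) : ℝ := 2 + (N:ℝ)^(α-2) * min 1 (|(r:ℝ)|/N)

theorem weight_sum (α : ℝ) (hα : 2 < α) (hα3 : α < 3) : ∃ K, 0 < K ∧ ∀ N : ℕ, 1 ≤ N →
    Summable (fun r : ℤ => cW α r * mulU α N r * |(r:ℝ)|) ∧ ∑' r : ℤ, cW α r * mulU α N r * |(r:ℝ)| ≤ K := by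
  have hsum1 : Summable (fun n : ℕ => ((n:ℝ)+1)^(1-α)) := by
    have := (summable_nat_add_iff 1).2 (Real.summable_nat_rpow.2 (show 1-α < -1 by linarith))
    simpa using this
  set S := ∑' n : ℕ, ((n:ℝ)+1)^(1-α) with hS
  have hS0 : 0 ≤ S := tsum_nonneg (fun n => by positivity)
  have hd1 : 0 < 1/(3-α) := by have : 0 < 3 - α := by linarith
                               positivity
  have hd2 : 0 < 1/(α-2) := by have : 0 < α - 2 := by linarith
                               positivity
  set K0 := 2 * S + (1/(3-α) + 1/(α-2)) with hK0
  refine ⟨2 * K0, by positivity, fun N hN => ?_⟩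
  have hNpos : (0:ℝ) < N := by exact_mod_cast hN
  set f : ℤ → ℝ := fun r => cW α r * mulU α N r * |(r:ℝ)| with hf
  have f0 : f 0 = 0 := by simp [hf]
  have hfnn : ∀ r, 0 ≤ f r := fun r => by
    have := cW_nonneg α r
    simp only [hf, mulU]; positivity
  have fsucc : ∀ n : ℕ, f ((n+1 : ℕ) : ℤ) = 2 * ((n:ℝ)+1)^(1-α) + (N:ℝ)^(α-2) * (((n:ℝ)+1)^(-1-(α-2)) * min 1 (((n:ℝ)+1)/N)) := by
    intro n
    simp only [hf, mulU, cW]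
    have h1 : (0:ℝ) < (n:ℝ)+1 := by positivity
    push_cast
    rw [abs_of_pos h1]
    have e1 : ((n:ℝ)+1)^(1-α) = (((n:ℝ)+1)^α)⁻¹ * ((n:ℝ)+1) := by
      rw [Real.rpow_sub h1, Real.rpow_one]; ring
    rw [show -1-(α-2) = 1 - α by ring, e1]
    ring
  have hpart : ∀ M, ∑ n ∈ Finset.range M, f ((n+1 : ℕ) : ℤ) ≤ K0 := by
    intro M
    simp only [fsucc]
    rw [Finset.sum_add_distrib, ← Finset.mul_sum, ← Finset.mul_sum]
    have i1 : ∑ n ∈ Finset.range M, ((n:ℝ)+1)^(1-α) ≤ S := hsum1.sum_le_tsum _ (fun n _ => by positivity)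
    have i2 := mul_le_mul_of_nonneg_left (sum_min_bound (α-2) (by linarith) (by linarith) N hN M) (show 0 ≤ (N:ℝ)^(α-2) by positivity)
    have e3 : (N:ℝ)^(α-2) * ((1/(1-(α-2)) + 1/(α-2)) * (N:ℝ)^(-(α-2))) = 1/(3-α) + 1/(α-2) := by
      rw [mul_left_comm, ← Real.rpow_add hNpos]; simp; ring
    rw [e3] at i2
    linarith
  have hsN : Summable (fun n : ℕ => f ((n+1 : ℕ) : ℤ)) := summable_of_sum_range_le (fun n => hfnn _) hpart
  have htN : ∑' n : ℕ, f ((n+1 : ℕ) : ℤ) ≤ K0 := hsN.tsum_le_of_sum_range_le hpart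
  have hsN' : Summable (fun n : ℕ => f (n : ℤ)) := (summable_nat_add_iff (f := fun n : ℕ => f (n : ℤ)) 1).1 hsN
  have htN' : ∑' n : ℕ, f (n : ℤ) ≤ K0 := by
    rw [hsN'.tsum_eq_zero_add]
    simp only [Nat.cast_zero, f0, zero_add]
    exact htN
  have hneg : ∀ r, f (-r) = f r := by
    intro r
    simp only [hf, mulU, cW_neg, Int.cast_neg, abs_neg]
  have H := HasSum.of_nat_of_neg (f := f) hsN'.hasSum (hsN'.hasSum.congr_fun (fun n => hneg n))
  refine ⟨H.summable, ?_⟩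
  rw [H.tsum_eq, f0]
  linarith

/-- separation indicator -/
noncomputable def sepI (a : ℕ) (r i : ℤ) : ℝ :=
  if (i.natAbs ≤ a ↔ (i - r).natAbs ≤ a) then 0 else 1

theorem sepI_nonneg (a : ℕ) (r i : ℤ) : 0 ≤ sepI a r i := by unfold sepI; split_ifs <;> norm_num

theorem sepI_hasSum (a : ℕ) (r : ℤ) : Summable (sepI a r) ∧ ∑' i, sepI a r i ≤ 2 * |(r:ℝ)| := by
  set s : Finset ℤ := Finset.Ico (-(a:ℤ) + min r 0) (-(a:ℤ) + max r 0) ∪ Finset.Ioc ((a:ℤ) + min r 0) ((a:ℤ) + max r 0) with hs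
  have hz : ∀ i ∉ s, sepI a r i = 0 := by
    intro i hi
    unfold sepI
    rw [if_pos]
    rw [hs, Finset.mem_union, Finset.mem_Ico, Finset.mem_Ioc] at hi
    omega
  have hcard : (s.card : ℝ) ≤ 2 * |(r:ℝ)| := by
    have h1 := Finset.card_union_le (Finset.Ico (-(a:ℤ) + min r 0) (-(a:ℤ) + max r 0)) (Finset.Ioc ((a:ℤ) + min r 0) ((a:ℤ) + max r 0))
    rw [← hs, Int.card_Ico, Int.card_Ioc] at h1
    have h2 : (s.card : ℤ) ≤ 2 * |r| := by
      rcases le_total r 0 with h | h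
      · rw [abs_of_nonpos h]; omega
      · rw [abs_of_nonneg h]; omega
    exact_mod_cast h2
  refine ⟨summable_of_ne_finset_zero hz, ?_⟩
  rw [tsum_eq_sum hz]
  refine le_trans ?_ hcard
  calc ∑ i ∈ s, sepI a r i ≤ ∑ i ∈ s, (1:ℝ) := Finset.sum_le_sum fun i _ => by unfold sepI; split_ifs <;> norm_num
    _ = _ := by simp

theorem sep_sum (w : ℤ → ℝ) (hw : ∀ r, 0 ≤ w r) (hs : Summable (fun r => w r * |(r:ℝ)|)) (a : ℕ) :
    Summable (fun p : ℤ × ℤ => w p.1 * sepI a p.1 p.2) ∧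
      ∑' p : ℤ × ℤ, w p.1 * sepI a p.1 p.2 ≤ 2 * ∑' r, w r * |(r:ℝ)| := by
  have hle : ∀ r, ∑' i, w r * sepI a r i ≤ 2 * (w r * |(r:ℝ)|) := by
    intro r
    rw [tsum_mul_left]
    have := mul_le_mul_of_nonneg_left (sepI_hasSum a r).2 (hw r)
    linarith
  have hnn : ∀ r i, 0 ≤ w r * sepI a r i := fun r i => mul_nonneg (hw r) (sepI_nonneg a r i)
  have hsr : Summable (fun r => ∑' i, w r * sepI a r i) :=
    Summable.of_nonneg_of_le (fun r => tsum_nonneg (hnn r)) hle (hs.mul_left 2)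
  have hsum : Summable (fun p : ℤ × ℤ => w p.1 * sepI a p.1 p.2) :=
    (summable_prod_of_nonneg (f := fun p : ℤ × ℤ => w p.1 * sepI a p.1 p.2)
      (fun p => hnn p.1 p.2)).2 ⟨fun r => (sepI_hasSum a r).1.mul_left (w r), hsr⟩
  refine ⟨hsum, ?_⟩
  rw [hsum.tsum_prod, ← tsum_mul_left]
  exact hsr.tsum_le_tsum hle (hs.mul_left 2)

/-- kink function -/
noncomputable def kinkX (m l : ℕ) (n : Fin m → ℤ) (k : ℤ) : ℝ :=
  ∑ j : Fin m, (n j : ℝ) * (if k.natAbs ≤ (j.val+1) * l then 1 else 0)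

theorem kink_count (m l : ℕ) (hl : 1 ≤ l) (i r : ℤ) :
    ∑ j : Fin m, sepI ((j.val+1) * l) r i ≤ |(r:ℝ)| / l + 2 := by
  have h1 : ∑ j : Fin m, sepI ((j.val+1) * l) r i =
      ((Finset.univ.filter (fun j : Fin m => ¬ (i.natAbs ≤ (j.val+1) * l ↔ (i - r).natAbs ≤ (j.val+1) * l))).card : ℝ) := by
    rw [Finset.card_filter]
    push_cast
    apply Finset.sum_congr rfl
    intro j _
    unfold sepI
    split_ifs <;> simp_all
  rw [h1]
  set A := min i.natAbs (i-r).natAbs with hA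
  set Bm := max i.natAbs (i-r).natAbs with hBm
  have h2 : (Finset.univ.filter (fun j : Fin m => ¬ (i.natAbs ≤ (j.val+1) * l ↔ (i - r).natAbs ≤ (j.val+1) * l))).card
      ≤ (Finset.Icc (A / l) (Bm / l)).card := by
    apply Finset.card_le_card_of_injOn (fun j => j.val + 1)
    · intro j hj
      simp only [Finset.coe_filter, Finset.mem_univ, true_and, Set.mem_ofPred_eq] at hj
      simp only [Finset.coe_Icc, Set.mem_Icc]
      constructor
      · apply Nat.div_le_of_le_mul
        rw [mul_comm]; omega
      · rw [Nat.le_div_iff_mul_le (by omega)]; omega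
    · intro a _ b _ hab
      ext
      simpa using hab
  rw [Nat.card_Icc] at h2
  have hlpos : (0:ℝ) < l := by exact_mod_cast hl
  have h3 : ((Bm / l : ℕ) : ℝ) ≤ (Bm:ℝ) / l := Nat.cast_div_le
  have h4 : (A:ℝ) / l < ((A / l : ℕ) : ℝ) + 1 := by
    rw [div_lt_iff₀ hlpos]
    have := Nat.lt_div_mul_add (a := A) (b := l) (by omega)
    have h5 : A < (A / l + 1) * l := by rw [add_mul, one_mul]; exact this
    exact_mod_cast h5
  have h5 : (Bm:ℝ) - A ≤ |(r:ℝ)| := by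
    have : (Bm:ℤ) - A ≤ |r| := by rw [Int.abs_eq_natAbs]; omega
    exact_mod_cast this
  have h6 : A / l ≤ Bm / l := Nat.div_le_div_right (by omega)
  have h7 : ((Bm / l + 1 - A / l : ℕ) : ℝ) = ((Bm / l : ℕ) : ℝ) + 1 - ((A / l : ℕ) : ℝ) := by
    rw [Nat.cast_sub (by omega)]; push_cast; rfl
  have h8 : (Bm:ℝ)/l - A/l ≤ |(r:ℝ)| / l := by
    rw [← sub_div]; gcongr
  calc _ ≤ ((Bm / l + 1 - A / l : ℕ) : ℝ) := by exact_mod_cast h2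
    _ ≤ _ := by rw [h7]; linarith

theorem kink_energy (α : ℝ) (hα : 2 < α) (hα3 : α < 3) : ∃ K, 0 < K ∧ ∀ N m l : ℕ, 1 ≤ N → 1 ≤ l →
    (N:ℝ)^(3-α) ≤ l → (m:ℝ) ≤ (N:ℝ)^(α-2) → ∀ n : Fin m → ℤ,
      cE α (kinkX m l n) (kinkX m l n) ≤ K * ∑ j, (n j : ℝ)^2 := by
  obtain ⟨K, hK, hw⟩ := weight_sum α hα hα3
  refine ⟨2 * K, by positivity, fun N m l hN hl hNl hmN n => ?_⟩
  obtain ⟨ws, wb⟩ := hw N hN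
  have hNpos : (0:ℝ) < N := by exact_mod_cast hN
  have hlpos : (0:ℝ) < l := by exact_mod_cast hl
  have hnn : ∀ r, 0 ≤ cW α r * mulU α N r := fun r => by
    have := cW_nonneg α r
    unfold mulU; positivity
  have hcount : ∀ r i : ℤ, ∑ j : Fin m, sepI ((j.val+1) * l) r i ≤ mulU α N r := by
    intro r i
    unfold mulU
    rcases le_total (|(r:ℝ)|/N) 1 with h | h
    · rw [min_eq_right h]
      refine (kink_count m l hl i r).trans ?_
      have : |(r:ℝ)|/l ≤ (N:ℝ)^(α-2) * (|(r:ℝ)|/N) := by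
        have e : (N:ℝ)^(α-2) * (|(r:ℝ)|/N) = |(r:ℝ)| / (N:ℝ)^(3-α) := by
          have : (N:ℝ)^(α-2) * (N:ℝ)^(3-α) = N := by
            rw [← Real.rpow_add hNpos, show α - 2 + (3-α) = 1 by ring, Real.rpow_one]
          have h3 : 0 < (N:ℝ)^(3-α) := by positivity
          field_simp
          rw [mul_assoc, mul_comm, mul_assoc, mul_comm ((N:ℝ)^(3-α)), this]; 
        rw [e]; gcongr
      linarith
    · rw [min_eq_left h]
      have : ∑ j : Fin m, sepI ((j.val+1) * l) r i ≤ m := by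
        calc _ ≤ ∑ j : Fin m, (1:ℝ) := Finset.sum_le_sum fun j _ => by unfold sepI; split_ifs <;> norm_num
          _ = m := by simp
      linarith
  let e : ℤ × ℤ ≃ ℤ × ℤ :=
    { toFun := fun p => (p.2, p.2 - p.1)
      invFun := fun p => (p.1 - p.2, p.1)
      left_inv := fun p => by simp
      right_inv := fun p => by simp }
  have hb := fun j : Fin m => sep_sum (fun r => cW α r * mulU α N r) hnn ws ((j.val+1) * l)
  have hG : HasSum (fun p : ℤ × ℤ => ∑ j : Fin m, (n j : ℝ)^2 * (cW α p.1 * mulU α N p.1 * sepI ((j.val+1) * l) p.1 p.2))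
      (∑ j : Fin m, (n j : ℝ)^2 * ∑' p : ℤ × ℤ, (cW α p.1 * mulU α N p.1 * sepI ((j.val+1) * l) p.1 p.2)) :=
    hasSum_sum (fun j _ => (hb j).1.hasSum.mul_left _)
  have hpt : ∀ p : ℤ × ℤ, cT α (kinkX m l n) (kinkX m l n) (e p) ≤
      ∑ j : Fin m, (n j : ℝ)^2 * (cW α p.1 * mulU α N p.1 * sepI ((j.val+1) * l) p.1 p.2) := by
    rintro ⟨r, i⟩
    have he : e (r, i) = (i, i - r) := rfl
    rw [he]
    simp only [cT]
    have hd : (kinkX m l n i - kinkX m l n (i - r))^2 ≤ (∑ j : Fin m, (n j : ℝ)^2 * sepI ((j.val+1) * l) r i) * mulU α N r := by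
      have h1 : |kinkX m l n i - kinkX m l n (i - r)| ≤ ∑ j : Fin m, |(n j : ℝ)| * sepI ((j.val+1) * l) r i := by
        unfold kinkX
        rw [← Finset.sum_sub_distrib]
        refine (Finset.abs_sum_le_sum_abs _ _).trans (Finset.sum_le_sum fun j _ => ?_)
        rw [← mul_sub, abs_mul]
        apply mul_le_mul_of_nonneg_left _ (abs_nonneg _)
        unfold sepI
        split_ifs <;> simp_all
      have h2 := Finset.sum_mul_sq_le_sq_mul_sq (Finset.univ : Finset (Fin m))
        (fun j => |(n j : ℝ)| * sepI ((j.val+1) * l) r i) (fun j => sepI ((j.val+1) * l) r i)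
      have hid : ∀ j : Fin m, sepI ((j.val+1) * l) r i * sepI ((j.val+1) * l) r i = sepI ((j.val+1) * l) r i := by
        intro j; unfold sepI; split_ifs <;> simp
      simp only [mul_pow, sq_abs, sq (sepI _ _ _), hid, mul_assoc] at h2
      calc _ = |kinkX m l n i - kinkX m l n (i - r)|^2 := (sq_abs _).symm
        _ ≤ (∑ j : Fin m, |(n j : ℝ)| * sepI ((j.val+1) * l) r i)^2 := pow_le_pow_left₀ (abs_nonneg _) h1 2
        _ ≤ _ := h2
        _ ≤ _ := mul_le_mul_of_nonneg_left (hcount r i) (Finset.sum_nonneg fun j _ => mul_nonneg (sq_nonneg _) (sepI_nonneg _ _ _))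
    rw [sub_sub_cancel, ← sq]
    refine (mul_le_mul_of_nonneg_right hd (cW_nonneg α r)).trans (le_of_eq ?_)
    rw [Finset.sum_mul, Finset.sum_mul]
    apply Finset.sum_congr rfl
    intro j _
    ring
  have hsT : Summable (fun p => cT α (kinkX m l n) (kinkX m l n) (e p)) :=
    Summable.of_nonneg_of_le (fun p => cT_self_nonneg α _ _) hpt hG.summable
  unfold cE
  rw [← e.tsum_eq]
  refine (hasSum_le hpt hsT.hasSum hG).trans ?_
  rw [Finset.mul_sum]
  apply Finset.sum_le_sum
  intro j _
  rw [mul_comm]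
  apply mul_le_mul_of_nonneg_right _ (sq_nonneg _)
  exact (hb j).2.trans (by linarith)

noncomputable def cfgEquiv (N : ℕ) : (cI N → ℤ) ≃ ChainConfig N where
  toFun φ := ⟨cExt N φ, cExt_zero N φ⟩
  invFun ψ := fun k => ψ.val k
  left_inv φ := by funext k; exact cExt_mem N φ k
  right_inv ψ := by
    apply Subtype.ext
    funext k
    show cExt N (fun k : cI N => ψ.val k) k = ψ.val k
    unfold cExt
    split_ifs with h
    · rfl
    · refine (ψ.2 k ?_).symm
      rw [Finset.mem_Icc, ← abs_le] at h
      omega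

theorem cExt_latJ (N : ℕ) (φ : cI N → ℤ) (k : ℤ) : cExt N (latJ (cI N) φ) k = ((cExt N φ k : ℤ) : ℝ) := by
  unfold cExt
  split_ifs <;> simp

theorem energy_eq (β α : ℝ) (hα : 1 < α) (N : ℕ) (φ : cI N → ℤ) :
    chainEnergy β α 2 (cfgEquiv N φ).val = cB β α hα N (latJ _ φ) (latJ _ φ) := by
  rw [cB_apply]
  unfold chainEnergy cE
  congr 1
  apply tsum_congr
  intro p
  show (if p.1 = p.2 then 0 else |((cExt N φ p.1 - cExt N φ p.2 : ℤ) : ℝ)| ^ (2:ℝ) / |((p.1 - p.2 : ℤ) : ℝ)| ^ α) = _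
  unfold cT cW
  rw [cExt_latJ, cExt_latJ]
  split_ifs with h
  · rw [h]; simp
  · rw [Real.rpow_two, sq_abs, div_eq_mul_inv]
    push_cast; ring

def cO (N : ℕ) : cI N := ⟨0, by simp⟩

theorem cfg_zero (N : ℕ) (φ : cI N → ℤ) : (cfgEquiv N φ).val 0 = φ (cO N) :=
  cExt_mem N φ (cO N)

theorem chainZ_eq (β α : ℝ) (hα : 1 < α) (N : ℕ) :
    chainZ N β α 2 = ∑' φ : cI N → ℤ, Real.exp (-(cB β α hα N (latJ _ φ) (latJ _ φ))) := by
  unfold chainZ chainWeight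
  rw [← (cfgEquiv N).tsum_eq]
  apply tsum_congr
  intro φ
  rw [energy_eq β α hα]

theorem chainMean_eq (β α : ℝ) (hα : 1 < α) (N : ℕ) : chainMean N β α 2 = 0 := by
  unfold chainMean chainWeight
  rw [← (cfgEquiv N).tsum_eq]
  simp only [energy_eq β α hα, cfg_zero]
  have h : ∑' φ : cI N → ℤ, (φ (cO N) : ℝ) * Real.exp (-(cB β α hα N (latJ _ φ) (latJ _ φ)))
      = - ∑' φ : cI N → ℤ, (φ (cO N) : ℝ) * Real.exp (-(cB β α hα N (latJ _ φ) (latJ _ φ))) := by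
    conv_lhs => rw [← (Equiv.neg (cI N → ℤ)).tsum_eq]
    rw [← tsum_neg]
    apply tsum_congr
    intro φ
    simp only [Equiv.neg_apply, map_neg, LinearMap.neg_apply, neg_neg, Pi.neg_apply, Int.cast_neg, neg_mul]
  have h0 := self_eq_neg.1 h
  rw [h0, zero_div]

theorem chainVar_eq (β α : ℝ) (hα : 1 < α) (N : ℕ) :
    chainVar N β α 2 = (∑' φ : cI N → ℤ, (φ (cO N) : ℝ)^2 * Real.exp (-(cB β α hα N (latJ _ φ) (latJ _ φ)))) /
      (∑' φ : cI N → ℤ, Real.exp (-(cB β α hα N (latJ _ φ) (latJ _ φ)))) := by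
  unfold chainVar
  rw [chainMean_eq β α hα, chainZ_eq β α hα]
  unfold chainWeight
  rw [← (cfgEquiv N).tsum_eq]
  simp only [energy_eq β α hα, cfg_zero]
  ring

def kinkT (N m l : ℕ) : (Fin m → ℤ) →+ (cI N → ℤ) where
  toFun n k := ∑ j : Fin m, n j * (if k.val.natAbs ≤ (j.val+1) * l then 1 else 0)
  map_zero' := by funext k; simp
  map_add' a b := by funext k; simp only [Pi.add_apply, add_mul _ _ (ite _ _ _), Finset.sum_add_distrib]

theorem kinkT_ext (N m l : ℕ) (h : m * l ≤ N) (n : Fin m → ℤ) :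
    cExt N (latJ (cI N) (kinkT N m l n)) = kinkX m l n := by
  funext k
  rw [cExt_latJ]
  unfold cExt kinkX
  split_ifs with hk
  · simp only [kinkT, AddMonoidHom.coe_mk, ZeroHom.coe_mk]
    push_cast
    rfl
  · rw [Int.cast_zero]
    symm
    apply Finset.sum_eq_zero
    intro j _
    rw [if_neg, mul_zero]
    have h1 : (j.val+1) * l ≤ m * l := Nat.mul_le_mul_right _ j.2
    rw [Finset.mem_Icc] at hk
    omega

theorem lm_exists (α : ℝ) (hα : 2 < α) (hα3 : α < 3) (N : ℕ) (hN : 1 ≤ N) :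
    ∃ m l : ℕ, 1 ≤ l ∧ m * l ≤ N ∧ (N:ℝ)^(3-α) ≤ l ∧ (m:ℝ) ≤ (N:ℝ)^(α-2) ∧ (1/4) * (N:ℝ)^(α-2) ≤ m := by
  have hN1 : (1:ℝ) ≤ N := by exact_mod_cast hN
  have hNpos : (0:ℝ) < N := by linarith
  set y := (N:ℝ)^(3-α) with hy
  set z := (N:ℝ)^(α-2) with hz
  have hyz : z * y = N := by
    rw [hy, hz, ← Real.rpow_add hNpos, show α - 2 + (3-α) = 1 by ring, Real.rpow_one]
  have hy1 : 1 ≤ y := Real.one_le_rpow hN1 (by linarith)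
  have hz1 : 1 ≤ z := Real.one_le_rpow hN1 (by linarith)
  have hly : y ≤ (⌈y⌉₊ : ℝ) := Nat.le_ceil y
  have hl2 : (⌈y⌉₊ : ℝ) < y + 1 := Nat.ceil_lt_add_one (by linarith)
  have hlN : ⌈y⌉₊ ≤ N := Nat.ceil_le.2 (by nlinarith)
  have hl1 : 1 ≤ ⌈y⌉₊ := Nat.one_le_ceil_iff.2 (by linarith)
  set l := ⌈y⌉₊
  have hlpos : (0:ℝ) < l := by linarith
  have hml : N / l * l ≤ N := Nat.div_mul_le_self N l
  have hm1 : 1 ≤ N / l := (Nat.one_le_div_iff (by omega)).2 hlN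
  have hmlt : N < N / l * l + l := Nat.lt_div_mul_add (by omega)
  refine ⟨N / l, l, hl1, hml, hly, ?_, ?_⟩
  · have : ((N/l : ℕ):ℝ) * l ≤ N := by exact_mod_cast hml
    have h0 : (0:ℝ) ≤ ((N/l : ℕ):ℝ) := by positivity
    nlinarith
  · have h1 : (N:ℝ) < ((N/l : ℕ):ℝ) * l + l := by exact_mod_cast hmlt
    have h2 : (1:ℝ) ≤ ((N/l : ℕ):ℝ) := by exact_mod_cast hm1
    have h3 : z * y < 4 * ((N/l : ℕ):ℝ) * y := by
      rw [hyz]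
      nlinarith
    have := lt_of_mul_lt_mul_right h3 (by linarith)
    linarith

/-- **Polynomial delocalisation of the discrete Gaussian long-range chain for `α ∈ (2,3)`.**
For every `β ∈ (0,∞)` and every `α ∈ (2,3)` there exist constants `c_β > 0` and `C_β < ∞`
such that for every `N ≥ 1`, `c_β N^{α−2} ≤ Var_{N,β,α}[φ(0)] ≤ C_β N^{α−2}`. -/
theorem gaussian_chain_poly_deloc_alpha_two_three
    (β : ℝ) (hβ : 0 < β) (α : ℝ) (hα₁ : 2 < α) (hα₂ : α < 3) :
    ∃ c C : ℝ, 0 < c ∧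
      ∀ N : ℕ, 1 ≤ N →
        c * (N : ℝ) ^ (α - 2) ≤ chainVar N β α 2 ∧
          chainVar N β α 2 ≤ C * (N : ℝ) ^ (α - 2) := by
  have hα : 1 < α := by linarith
  obtain ⟨Ks, hKs, hsob⟩ := sobolev α hα₁ hα₂
  obtain ⟨Kk, hKk, hkink⟩ := kink_energy α hα₁ hα₂
  set C := β * Kk + 1 with hC
  have hC0 : 0 < C := by positivity
  have hth : 0 < ∑' k : ℤ, Real.exp (-(C * (k:ℝ)^2)) :=
    (summable_gauss1 C hC0).tsum_pos (fun k => (Real.exp_pos _).le) 0 (Real.exp_pos _)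
  set d := Real.exp (-C) / ∑' k : ℤ, Real.exp (-(C * (k:ℝ)^2)) with hd
  have hd0 : 0 < d := div_pos (Real.exp_pos _) hth
  refine ⟨(1/4) * d, Ks / β, by positivity, fun N hN => ?_⟩
  have hNpos : (0:ℝ) < N := by exact_mod_cast hN
  obtain ⟨c, hc, hB⟩ := cB_coercive β α hβ hα N
  have hZs : Summable (fun φ : cI N → ℤ => Real.exp (-(cB β α hα N (latJ _ φ) (latJ _ φ)))) := by
    have := B_summable' (cB β α hα N) c hc hB 0
    simpa using this
  have hZ : 0 < ∑' φ : cI N → ℤ, Real.exp (-(cB β α hα N (latJ _ φ) (latJ _ φ))) :=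
    hZs.tsum_pos (fun φ => (Real.exp_pos _).le) 0 (Real.exp_pos _)
  rw [chainVar_eq β α hα]
  constructor
  · obtain ⟨m, l, hl, hml, hly, hmz, hm4⟩ := lm_exists α hα₁ hα₂ N hN
    have key := gauss_lower (cB β α hα N) c (cB_symm β α hα N) hc hB m (kinkT N m l) C 1 hC0 one_pos
      (fun n => by
        rw [cB_apply, kinkT_ext N m l hml]
        have := mul_le_mul_of_nonneg_left (hkink N m l hN hl hly hmz n) hβ.le
        rw [hC]; linarith) (cO N) (fun n => by simp [kinkT, cO])
    rw [le_div_iff₀ hZ]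
    refine le_trans ?_ key
    apply mul_le_mul_of_nonneg_right _ hZ.le
    calc _ = ((1/4) * (N:ℝ)^(α-2)) * d := by ring
      _ ≤ _ := mul_le_mul_of_nonneg_right hm4 hd0.le
  · have hz : 0 < (N:ℝ)^(α-2) := by positivity
    rw [div_le_iff₀ hZ]
    refine gauss_upper (cB β α hα N) c (cB_symm β α hα N) hc hB (cO N) _ (by positivity) (fun x => ?_)
    have := hsob N hN (cExt N x) (cExt_zero N x)
    have e : cExt N x 0 = x (cO N) := cExt_mem N x (cO N)
    rw [e] at this
    rw [cB_apply]
    refine this.trans (le_of_eq ?_)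
    field_simp
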